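/- arXiv:2510.21334 — 2 statements merged into one kernel-verified Lean document; each statement's English description precedes it below -/
import Mathlib

section
/- For i = 1, 2, let Γ_i be a finitely generated subgroup of SL(d_i,ℝ) which is P_{θ_i}-Anosov for some nonempty θ_i ⊆ {1,…,d_i−1}: there exist a, C > 0 such that log σ_k(γ) − log σ_{k+1}(γ) ≥ a·|γ| − C for all γ ∈ Γ_i and all k ∈ θ_i, where |γ| is word length with respect to a fixed finite generating set. Then there exist d and an injective homomorphism ρ from the free product Γ₁ * Γ₂ into SL(d,ℝ) whose image is P_{1,d−1}-Anosov: there exist a', C' > 0 such that log σ₁(ρ(w)) − log σ₂(ρ(w)) ≥ a'·|w| − C' and log σ_{d−1}(ρ(w)) − log σ_d(ρ(w)) ≥ a'·|w| − C' for all w ∈ Γ₁ * Γ₂, where |w| is word length in Γ₁ * Γ₂. (Douba–Tsouvalas, Danciger–Guéritaud–Kassel: any free product of Anosov groups is isomorphic to an Anosov group.) -/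
/-!
Replacing a representation by its `k`-th compound turns a gap between `σ_k` and `σ_{k+1}` into a
gap between `σ₁` and `σ₂`, which high tensor powers enlarge until it beats the growth of any fixed
representation. Adding the original representation as a direct summand then keeps the gap, and a
generic matrix coefficient of the sum stays away from its value at `1` by a fixed proportion of the
norm. Conjugating by a unipotent matrix moves this coefficient to an off-diagonal entry `(p, q)`,
where it vanishes at `1`, and a diagonal conjugation stretches that entry until every `γ ≠ 1` is
nearly a multiple of the elementary matrix at `(p, q)`.

With the entry `(p, q)` for `Γ₁` and `(q, p)` for `Γ₂`, no cancellation can occur along an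
alternating product, so that the ratio `‖Λ²A‖ / ‖A‖²`, which measures `σ₂ / σ₁`, decays
exponentially in the word length. Tensor squares have positive determinant and can be rescaled to
land in `SL`; as `σ_d(A) = 1 / σ₁(A⁻¹)` and word length is invariant under inversion, the gap at
`d - 1` follows from the one at `1`.
-/

open Matrix

/-- The `k`-th singular value (1-indexed, in nonincreasing order) of a real `d × d` matrix:
the square roots of the eigenvalues of `Aᴴ * A = Aᵀ * A`, sorted in nonincreasing order. -/
noncomputable def sval {d : ℕ} (A : Matrix (Fin d) (Fin d) ℝ) (k : ℕ) : ℝ :=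
  if h : 1 ≤ k ∧ k ≤ d then
    (fun i => Real.sqrt ((Matrix.isHermitian_conjTranspose_mul_self A).eigenvalues i))
      ((Tuple.sort fun i => Real.sqrt ((Matrix.isHermitian_conjTranspose_mul_self A).eigenvalues i))
        (Fin.rev ⟨k - 1, by omega⟩))
  else 0

/-- Word length of `γ` with respect to a generating set `S`: the least `n` such that
`γ` is a product of `n` elements of `S ∪ S⁻¹`. -/
noncomputable def wordLength {G : Type*} [Group G] (S : Set G) (γ : G) : ℕ :=
  sInf {n | ∃ w : List G, w.length = n ∧ (∀ g ∈ w, g ∈ S ∨ g⁻¹ ∈ S) ∧ w.prod = γ}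

namespace FreeProductAnosov

open scoped Matrix.Norms.Frobenius Kronecker

section ExteriorSquare

variable {ι κ μ : Type*}

/-- The second exterior power of a matrix, as an operator on tensors `x ⊗ y`: it is `A ⊗ A`
composed with the antisymmetrization projector. Indexing by all pairs of indices, instead of
two-element sets, avoids choosing an order on them. Its norm compared with `‖A‖ ^ 2` measures the
gap between the first two singular values of `A`. -/
noncomputable def exteriorSquare (A : Matrix ι κ ℝ) : Matrix (ι × ι) (κ × κ) ℝ :=
  of fun p q ↦ (A p.1 q.1 * A p.2 q.2 - A p.1 q.2 * A p.2 q.1) / 2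

theorem exteriorSquare_apply (A : Matrix ι κ ℝ) (p : ι × ι) (q : κ × κ) :
    exteriorSquare A p q = (A p.1 q.1 * A p.2 q.2 - A p.1 q.2 * A p.2 q.1) / 2 := rfl

theorem exteriorSquare_smul (c : ℝ) (A : Matrix ι κ ℝ) :
    exteriorSquare (c • A) = c ^ 2 • exteriorSquare A := by
  ext p q
  simp only [exteriorSquare_apply, Matrix.smul_apply, smul_eq_mul]
  ring

theorem exteriorSquare_mul [Fintype κ] (A : Matrix ι κ ℝ) (B : Matrix κ μ ℝ) :
    exteriorSquare (A * B) = exteriorSquare A * exteriorSquare B := by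
  ext ⟨i, i'⟩ ⟨j, j'⟩
  let F (i i' : ι) (j j' : μ) (p : κ × κ) : ℝ := A i p.1 * A i' p.2 * (B p.1 j * B p.2 j')
  have hF (i i' : ι) (j j' : μ) : (A * B) i j * (A * B) i' j' = ∑ p, F i i' j j' p := by
    simp only [mul_apply, Finset.sum_mul_sum, Fintype.sum_prod_type, F]
    exact Finset.sum_congr rfl fun k _ ↦ Finset.sum_congr rfl fun k' _ ↦ by ring
  have hswap : ∑ p, (F i i' j j' p - F i i' j' j p) = ∑ p, (F i' i j' j p - F i' i j j' p) := by
    rw [← (Equiv.prodComm κ κ).sum_comp]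
    refine Finset.sum_congr rfl fun p _ ↦ ?_
    simp only [F, Equiv.prodComm_apply, Prod.fst_swap, Prod.snd_swap]
    ring
  have hsplit : ∑ p, exteriorSquare A (i, i') p * exteriorSquare B p (j, j') =
      (∑ p, (F i i' j j' p - F i i' j' j p) + ∑ p, (F i' i j' j p - F i' i j j' p)) / 4 := by
    rw [← Finset.sum_add_distrib, Finset.sum_div]
    refine Finset.sum_congr rfl fun p _ ↦ ?_
    simp only [exteriorSquare_apply, F]
    ring
  rw [mul_apply, hsplit, ← hswap, exteriorSquare_apply, hF, hF, Finset.sum_sub_distrib]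
  ring

variable [Fintype ι] [Fintype κ] [Fintype μ]

theorem frobenius_norm_sq (A : Matrix ι κ ℝ) : ‖A‖ ^ 2 = ∑ i, ∑ j, A i j ^ 2 := by
  rw [frobenius_norm_def, ← Real.sqrt_eq_rpow, Real.sq_sqrt (by positivity)]
  simp

theorem frobenius_norm_sq_eq_trace (A : Matrix ι κ ℝ) : ‖A‖ ^ 2 = (Aᵀ * A).trace := by
  simp only [frobenius_norm_sq, trace, diag_apply, mul_apply, transpose_apply, ← sq]
  exact Finset.sum_comm

theorem abs_entry_le_frobenius_norm (A : Matrix ι κ ℝ) (i : ι) (j : κ) : |A i j| ≤ ‖A‖ := by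
  refine abs_le_of_sq_le_sq ?_ (norm_nonneg A)
  rw [frobenius_norm_sq, ← Fintype.sum_prod_type']
  exact Finset.single_le_sum (f := fun p : ι × κ ↦ A p.1 p.2 ^ 2)
    (fun p _ ↦ sq_nonneg _) (Finset.mem_univ (i, j))

theorem frobenius_norm_submatrix_equiv {ι' κ' : Type*} [Fintype ι'] [Fintype κ']
    (A : Matrix ι κ ℝ) (e : ι' ≃ ι) (f : κ' ≃ κ) : ‖A.submatrix e f‖ = ‖A‖ := by
  rw [← sq_eq_sq₀ (norm_nonneg _) (norm_nonneg _), frobenius_norm_sq, frobenius_norm_sq]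
  simp only [submatrix_apply]
  rw [← e.sum_comp (fun i ↦ ∑ j, A i j ^ 2)]
  exact Finset.sum_congr rfl fun i _ ↦ f.sum_comp fun j ↦ A (e i) j ^ 2

theorem frobenius_norm_kronecker {ι' κ' : Type*} [Fintype ι'] [Fintype κ'] (A : Matrix ι κ ℝ)
    (B : Matrix ι' κ' ℝ) : ‖A ⊗ₖ B‖ = ‖A‖ * ‖B‖ := by
  rw [← sq_eq_sq₀ (norm_nonneg _) (by positivity), mul_pow]
  simp only [frobenius_norm_sq, Fintype.sum_prod_type, kroneckerMap_apply, mul_pow,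
    Finset.sum_mul_sum]

theorem frobenius_norm_sq_fromBlocks_diagonal {ι' κ' : Type*} [Fintype ι'] [Fintype κ']
    (A : Matrix ι κ ℝ) (B : Matrix ι' κ' ℝ) :
    ‖fromBlocks A 0 0 B‖ ^ 2 = ‖A‖ ^ 2 + ‖B‖ ^ 2 := by
  simp [frobenius_norm_sq]

theorem frobenius_norm_mul_of_transpose_mul_eq_one [DecidableEq κ] {O : Matrix ι κ ℝ}
    (hO : Oᵀ * O = 1) (A : Matrix κ μ ℝ) : ‖O * A‖ = ‖A‖ := by
  rw [← sq_eq_sq₀ (norm_nonneg _) (norm_nonneg _), frobenius_norm_sq_eq_trace,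
    frobenius_norm_sq_eq_trace, transpose_mul, Matrix.mul_assoc, ← Matrix.mul_assoc Oᵀ, hO,
    Matrix.one_mul]

theorem frobenius_norm_mul_of_mul_transpose_eq_one [DecidableEq κ] {Q : Matrix κ μ ℝ}
    (hQ : Q * Qᵀ = 1) (A : Matrix ι κ ℝ) : ‖A * Q‖ = ‖A‖ := by
  rw [← frobenius_norm_transpose, transpose_mul,
    frobenius_norm_mul_of_transpose_mul_eq_one (by rwa [transpose_transpose]),
    frobenius_norm_transpose]

theorem norm_exteriorSquare_mul_le (A : Matrix ι κ ℝ) (B : Matrix κ μ ℝ) :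
    ‖exteriorSquare (A * B)‖ ≤ ‖exteriorSquare A‖ * ‖exteriorSquare B‖ := by
  rw [exteriorSquare_mul]
  exact frobenius_norm_mul _ _

-- Twice the left-hand side is `∑ (sᵢ sⱼ)²` over ordered pairs `i ≠ j` of singular values of `A`,
-- while `‖A‖ ^ 2 = ∑ sᵢ²` and `‖Aᵀ * A‖ ^ 2 = ∑ sᵢ⁴`.
theorem norm_exteriorSquare_sq (A : Matrix ι κ ℝ) :
    ‖exteriorSquare A‖ ^ 2 = (‖A‖ ^ 4 - ‖Aᵀ * A‖ ^ 2) / 2 := by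
  have hsq : ‖A‖ ^ 4 = ∑ i, ∑ i', ∑ j, ∑ j', A i j ^ 2 * A i' j' ^ 2 := by
    rw [show ‖A‖ ^ 4 = ‖A‖ ^ 2 * ‖A‖ ^ 2 by ring, frobenius_norm_sq, Finset.sum_mul_sum]
    simp only [Finset.sum_mul_sum]
  have hgram : ‖Aᵀ * A‖ ^ 2 = ∑ i, ∑ i', ∑ j, ∑ j', A i j * A i' j' * (A i j' * A i' j) := by
    calc ‖Aᵀ * A‖ ^ 2 = ∑ j, ∑ j', ∑ i, ∑ i', A i j * A i' j' * (A i j' * A i' j) := by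
          rw [frobenius_norm_sq]
          simp only [mul_apply, transpose_apply, sq, Finset.sum_mul_sum]
          refine Finset.sum_congr rfl fun j _ ↦ Finset.sum_congr rfl fun j' _ ↦
            Finset.sum_congr rfl fun i _ ↦ Finset.sum_congr rfl fun i' _ ↦ by ring
      _ = ∑ p : κ × κ, ∑ q : ι × ι, A q.1 p.1 * A q.2 p.2 * (A q.1 p.2 * A q.2 p.1) := by
          simp only [Fintype.sum_prod_type]
      _ = _ := by
          rw [Finset.sum_comm]
          simp only [Fintype.sum_prod_type]
  have hswap : ‖A‖ ^ 4 = ∑ i, ∑ i', ∑ j, ∑ j', A i j' ^ 2 * A i' j ^ 2 := by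
    rw [hsq]
    exact Finset.sum_congr rfl fun i _ ↦ Finset.sum_congr rfl fun i' _ ↦ Finset.sum_comm
  have hexp : 4 * ‖exteriorSquare A‖ ^ 2 = ‖A‖ ^ 4 + ‖A‖ ^ 4 - 2 * ‖Aᵀ * A‖ ^ 2 := by
    rw [hgram, frobenius_norm_sq]
    nth_rewrite 1 [hsq]
    rw [hswap]
    simp only [Fintype.sum_prod_type, exteriorSquare_apply, Finset.mul_sum,
      ← Finset.sum_add_distrib, ← Finset.sum_sub_distrib]
    refine Finset.sum_congr rfl fun i _ ↦ Finset.sum_congr rfl fun i' _ ↦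
      Finset.sum_congr rfl fun j _ ↦ Finset.sum_congr rfl fun j' _ ↦ by ring
  linarith

theorem norm_exteriorSquare_le (A : Matrix ι κ ℝ) : ‖exteriorSquare A‖ ≤ ‖A‖ ^ 2 := by
  refine le_of_sq_le_sq ?_ (by positivity)
  rw [norm_exteriorSquare_sq]
  nlinarith [sq_nonneg ‖Aᵀ * A‖, sq_nonneg (‖A‖ ^ 2)]

theorem norm_exteriorSquare_submatrix_equiv {ι' κ' : Type*} [Fintype ι'] [Fintype κ']
    (A : Matrix ι κ ℝ) (e : ι' ≃ ι) (f : κ' ≃ κ) :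
    ‖exteriorSquare (A.submatrix e f)‖ = ‖exteriorSquare A‖ :=
  frobenius_norm_submatrix_equiv (exteriorSquare A) (e.prodCongr e) (f.prodCongr f)

theorem norm_exteriorSquare_kronecker_self_le (A : Matrix ι κ ℝ) :
    ‖exteriorSquare (A ⊗ₖ A)‖ ≤ 2 * ‖A‖ ^ 2 * ‖exteriorSquare A‖ := by
  have hA := norm_exteriorSquare_sq A
  have hAA : ‖exteriorSquare (A ⊗ₖ A)‖ ^ 2 = ((‖A‖ ^ 4) ^ 2 - (‖Aᵀ * A‖ ^ 2) ^ 2) / 2 := by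
    rw [norm_exteriorSquare_sq, ← kroneckerMap_transpose, ← mul_kronecker_mul,
      frobenius_norm_kronecker, frobenius_norm_kronecker]
    ring
  refine le_of_sq_le_sq ?_ (by positivity)
  rw [hAA, show (2 * ‖A‖ ^ 2 * ‖exteriorSquare A‖) ^ 2 =
    4 * ‖A‖ ^ 4 * ‖exteriorSquare A‖ ^ 2 by ring, hA]
  have hle : ‖Aᵀ * A‖ ^ 2 ≤ ‖A‖ ^ 4 := by linarith [sq_nonneg ‖exteriorSquare A‖]
  nlinarith [mul_nonneg (sub_nonneg.mpr hle) (sub_nonneg.mpr hle),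
    mul_nonneg (sub_nonneg.mpr hle) (sq_nonneg ‖Aᵀ * A‖)]

theorem norm_exteriorSquare_fromBlocks_diagonal_sq {ι' κ' : Type*} [Fintype ι'] [Fintype κ']
    (A : Matrix ι κ ℝ) (B : Matrix ι' κ' ℝ) :
    ‖exteriorSquare (fromBlocks A 0 0 B)‖ ^ 2 =
      ‖exteriorSquare A‖ ^ 2 + ‖exteriorSquare B‖ ^ 2 + (‖A‖ * ‖B‖) ^ 2 := by
  have hgram : (fromBlocks A 0 0 B)ᵀ * fromBlocks A 0 0 B =
      fromBlocks (Aᵀ * A) 0 0 (Bᵀ * B) := by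
    simp [fromBlocks_transpose, fromBlocks_multiply]
  have h4 : ‖fromBlocks A 0 0 B‖ ^ 4 = (‖A‖ ^ 2 + ‖B‖ ^ 2) ^ 2 := by
    rw [← frobenius_norm_sq_fromBlocks_diagonal]
    ring
  rw [norm_exteriorSquare_sq, norm_exteriorSquare_sq, norm_exteriorSquare_sq, hgram,
    frobenius_norm_sq_fromBlocks_diagonal, h4]
  ring

theorem norm_exteriorSquare_orthogonal_mul_mul {ι' κ' : Type*} [Fintype ι'] [Fintype κ']
    [DecidableEq ι] [DecidableEq κ] {O : Matrix ι' ι ℝ} {Q : Matrix κ κ' ℝ} (hO : Oᵀ * O = 1)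
    (hQ : Q * Qᵀ = 1) (A : Matrix ι κ ℝ) :
    ‖exteriorSquare (O * A * Q)‖ = ‖exteriorSquare A‖ := by
  have hgram : (O * A * Q)ᵀ * (O * A * Q) = Qᵀ * (Aᵀ * A) * Q := by
    simp only [transpose_mul, Matrix.mul_assoc]
    rw [← Matrix.mul_assoc Oᵀ, hO, Matrix.one_mul]
  rw [← sq_eq_sq₀ (norm_nonneg _) (norm_nonneg _), norm_exteriorSquare_sq,
    norm_exteriorSquare_sq, hgram, frobenius_norm_mul_of_mul_transpose_eq_one hQ,
    frobenius_norm_mul_of_transpose_mul_eq_one hO, frobenius_norm_mul_of_mul_transpose_eq_one hQ,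
    frobenius_norm_mul_of_transpose_mul_eq_one (by rwa [transpose_transpose])]

end ExteriorSquare

section Diagonal

variable {ι : Type*} [Fintype ι] [DecidableEq ι]

theorem norm_sq_diagonal (t : ι → ℝ) : ‖diagonal t‖ ^ 2 = ∑ i, t i ^ 2 := by
  rw [frobenius_norm_diagonal, EuclideanSpace.norm_sq_eq]
  simp

theorem norm_exteriorSquare_diagonal_sq (t : ι → ℝ) :
    ‖exteriorSquare (diagonal t)‖ ^ 2 = (∑ i, ∑ j, if i = j then 0 else (t i * t j) ^ 2) / 2 := by
  rw [norm_exteriorSquare_sq, diagonal_transpose, diagonal_mul_diagonal, norm_sq_diagonal,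
    show ‖diagonal t‖ ^ 4 = (‖diagonal t‖ ^ 2) ^ 2 by ring, norm_sq_diagonal, sq (∑ i, t i ^ 2),
    Finset.sum_mul_sum, ← Finset.sum_sub_distrib]
  congr 1
  refine Finset.sum_congr rfl fun i _ ↦ ?_
  rw [Finset.sum_ite, Finset.sum_const_zero, zero_add, sub_eq_iff_eq_add',
    ← Finset.add_sum_erase _ _ (Finset.mem_univ i)]
  congr 1
  · ring
  · refine Finset.sum_congr (by ext; simp [eq_comm]) fun j _ ↦ by ring

theorem norm_exteriorSquare_diagonal_le {t : ι → ℝ} {c : ℝ} (hc : 0 ≤ c)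
    (h : ∀ i j, i ≠ j → |t i * t j| ≤ c) :
    ‖exteriorSquare (diagonal t)‖ ≤ Fintype.card ι * c := by
  refine le_of_sq_le_sq ?_ (by positivity)
  have hterm (i j : ι) : (if i = j then 0 else (t i * t j) ^ 2) ≤ c ^ 2 := by
    split_ifs with hij
    · positivity
    · exact sq_le_sq.mpr ((h i j hij).trans (le_abs_self c))
  have hsum := Finset.sum_le_sum fun i (_ : i ∈ Finset.univ) ↦
    Finset.sum_le_sum fun j (_ : j ∈ Finset.univ) ↦ hterm i j
  simp only [Finset.sum_const, Finset.card_univ, nsmul_eq_mul] at hsum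
  rw [norm_exteriorSquare_diagonal_sq]
  nlinarith [sq_nonneg (Fintype.card ι * c)]

theorem abs_mul_le_norm_exteriorSquare_diagonal (t : ι → ℝ) {i j : ι} (hij : i ≠ j) :
    |t i * t j| ≤ ‖exteriorSquare (diagonal t)‖ := by
  refine abs_le_of_sq_le_sq ?_ (norm_nonneg _)
  have hrow : ∀ k, 0 ≤ ∑ l, if k = l then 0 else (t k * t l) ^ 2 := fun k ↦
    Finset.sum_nonneg fun l _ ↦ by positivity
  have hentry {k l : ι} (hkl : k ≠ l) :
      (t k * t l) ^ 2 ≤ ∑ l, if k = l then 0 else (t k * t l) ^ 2 := by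
    simpa [hkl] using Finset.single_le_sum
      (f := fun l ↦ if k = l then 0 else (t k * t l) ^ 2) (fun l _ ↦ by positivity)
      (Finset.mem_univ l)
  have hpair := Finset.add_le_sum (fun k _ ↦ hrow k) (Finset.mem_univ i) (Finset.mem_univ j) hij
  rw [norm_exteriorSquare_diagonal_sq]
  linarith [hentry hij, hentry hij.symm, mul_comm (t i) (t j) ▸ hentry hij.symm]

theorem norm_sq_one_le_norm_exteriorSquare_one [Nontrivial ι] :
    ‖(1 : Matrix ι ι ℝ)‖ ^ 2 ≤ 2 * ‖exteriorSquare (1 : Matrix ι ι ℝ)‖ := by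
  have hcard : (2 : ℝ) ≤ Fintype.card ι := mod_cast Fintype.one_lt_card
  have hone : ‖(1 : Matrix ι ι ℝ)‖ ^ 2 = Fintype.card ι := by
    rw [← diagonal_one, norm_sq_diagonal]
    simp
  refine le_of_sq_le_sq ?_ (by positivity)
  rw [mul_pow, norm_exteriorSquare_sq, transpose_one, Matrix.one_mul,
    show ‖(1 : Matrix ι ι ℝ)‖ ^ 4 = (‖(1 : Matrix ι ι ℝ)‖ ^ 2) ^ 2 by ring, hone]
  nlinarith

end Diagonal

section SingularValues

variable {d : ℕ}

/-- The permutation listing the eigenvalues of `Aᴴ * A` in nonincreasing order; it is the one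
implicit in the definition of `sval`. -/
noncomputable def singularValueOrder (A : Matrix (Fin d) (Fin d) ℝ) : Equiv.Perm (Fin d) :=
  Fin.revPerm.trans
    (Tuple.sort fun i ↦ Real.sqrt ((isHermitian_conjTranspose_mul_self A).eigenvalues i))

theorem sval_succ (A : Matrix (Fin d) (Fin d) ℝ) (i : Fin d) :
    sval A (i + 1) = Real.sqrt
      ((isHermitian_conjTranspose_mul_self A).eigenvalues (singularValueOrder A i)) := by
  rw [sval, dif_pos ⟨by omega, by omega⟩]
  rfl

theorem antitone_sval_succ (A : Matrix (Fin d) (Fin d) ℝ) :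
    Antitone fun i : Fin d ↦ sval A (i + 1) := by
  intro i j hij
  simp only [sval_succ]
  exact Tuple.monotone_sort
    (fun i ↦ Real.sqrt ((isHermitian_conjTranspose_mul_self A).eigenvalues i))
    (Fin.rev_le_rev.mpr hij)

theorem sval_succ_pos {A : Matrix (Fin d) (Fin d) ℝ} (hA : A.det ≠ 0) (i : Fin d) :
    0 < sval A (i + 1) := by
  rw [sval_succ]
  have hdet : (Aᴴ * A).det ≠ 0 := by simpa [det_mul, det_conjTranspose] using hA
  rw [(isHermitian_conjTranspose_mul_self A).det_eq_prod_eigenvalues] at hdet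
  exact Real.sqrt_pos.mpr (((posSemidef_conjTranspose_mul_self A).eigenvalues_nonneg _).lt_of_ne'
    fun h ↦ hdet (Finset.prod_eq_zero (Finset.mem_univ (singularValueOrder A i))
      (congrArg _ h)))

theorem exists_transpose_mul_self_diagonalization (A : Matrix (Fin d) (Fin d) ℝ) :
    ∃ Q : Matrix (Fin d) (Fin d) ℝ, Q * Qᵀ = 1 ∧
      Q * (Aᵀ * A) * Qᵀ = diagonal fun i : Fin d ↦ sval A (i + 1) ^ 2 := by
  let hH := isHermitian_conjTranspose_mul_self A
  let U : Matrix (Fin d) (Fin d) ℝ := hH.eigenvectorUnitary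
  let e := singularValueOrder A
  have hU : Uᵀ * U = 1 := Unitary.coe_star_mul_self hH.eigenvectorUnitary
  have hdiag : Uᵀ * (Aᵀ * A) * U = diagonal hH.eigenvalues := by
    have := hH.conjStarAlgAut_star_eigenvectorUnitary
    rwa [Unitary.conjStarAlgAut_star_apply] at this
  have hconj (B : Matrix (Fin d) (Fin d) ℝ) :
      (U.submatrix id e)ᵀ * B * (U.submatrix id e) = (Uᵀ * B * U).submatrix e e := by
    rw [transpose_submatrix, submatrix_mul _ _ e id e Function.bijective_id,
      submatrix_mul _ _ e id id Function.bijective_id, submatrix_id_id]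
  refine ⟨(U.submatrix id e)ᵀ, ?_, ?_⟩
  · simpa [hU] using hconj 1
  · rw [transpose_transpose, hconj, hdiag, submatrix_diagonal_equiv]
    congr 1
    funext i
    rw [sval_succ, Real.sq_sqrt ((posSemidef_conjTranspose_mul_self A).eigenvalues_nonneg _)]
    rfl

theorem exists_singularValueDecomposition {A : Matrix (Fin d) (Fin d) ℝ} (hA : A.det ≠ 0) :
    ∃ O Q : Matrix (Fin d) (Fin d) ℝ, Oᵀ * O = 1 ∧ Q * Qᵀ = 1 ∧
      A = O * diagonal (fun i : Fin d ↦ sval A (i + 1)) * Q := by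
  obtain ⟨Q, hQ, hdiag⟩ := exists_transpose_mul_self_diagonalization A
  set s : Fin d → ℝ := fun i ↦ sval A (i + 1)
  have hs (i : Fin d) : s i ≠ 0 := (sval_succ_pos hA i).ne'
  refine ⟨A * Qᵀ * diagonal s⁻¹, Q, ?_, hQ, ?_⟩
  · calc (A * Qᵀ * diagonal s⁻¹)ᵀ * (A * Qᵀ * diagonal s⁻¹)
        = diagonal s⁻¹ * (Q * (Aᵀ * A) * Qᵀ) * diagonal s⁻¹ := by
          simp only [transpose_mul, transpose_transpose, diagonal_transpose, Matrix.mul_assoc]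
      _ = 1 := by
          rw [hdiag, diagonal_mul_diagonal, diagonal_mul_diagonal, ← diagonal_one]
          congr 1
          funext i
          have := hs i
          simp only [Pi.inv_apply, s] at this ⊢
          field_simp
  · have hinv : diagonal s⁻¹ * diagonal s = 1 := by
      rw [diagonal_mul_diagonal, ← diagonal_one]
      exact congrArg diagonal (funext fun i ↦ inv_mul_cancel₀ (hs i))
    rw [Matrix.mul_assoc (A * Qᵀ), hinv, Matrix.mul_one, Matrix.mul_assoc,
      mul_eq_one_comm.mp hQ, Matrix.mul_one]

theorem prod_sval_eq_one {A : Matrix (Fin d) (Fin d) ℝ} (hA : A.det = 1) :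
    ∏ i : Fin d, sval A (i + 1) = 1 := by
  obtain ⟨O, Q, hO, hQ, hsvd⟩ := exists_singularValueDecomposition (hA ▸ one_ne_zero)
  have habs {R : Matrix (Fin d) (Fin d) ℝ} (hR : Rᵀ * R = 1) : |R.det| = 1 := by
    have := congrArg det hR
    rw [det_mul, det_transpose, det_one] at this
    rwa [← sq_eq_sq₀ (abs_nonneg _) zero_le_one, sq_abs, one_pow, sq]
  have hdet := congrArg (fun B ↦ |det B|) hsvd
  simp only [det_mul, det_diagonal, abs_mul, habs hO, habs (mul_eq_one_comm.mp hQ), hA] at hdet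
  rw [abs_one, one_mul, mul_one] at hdet
  rw [hdet, abs_of_pos (Finset.prod_pos fun i _ ↦ sval_succ_pos (hA ▸ one_ne_zero) i)]

theorem le_mul_of_norm_exteriorSquare_le {ι : Type*} [Fintype ι] [DecidableEq ι]
    {O Q : Matrix ι ι ℝ} (hO : Oᵀ * O = 1) (hQ : Q * Qᵀ = 1) {s : ι → ℝ} (hs : ∀ i, 0 < s i)
    {i₀ i₁ : ι} (hmax : ∀ i, s i ≤ s i₀) (hne : i₁ ≠ i₀) {ε : ℝ} (hε : 0 ≤ ε)
    (h : ‖exteriorSquare (O * diagonal s * Q)‖ ≤ ε * ‖O * diagonal s * Q‖ ^ 2) :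
    s i₁ ≤ ε * Fintype.card ι * s i₀ := by
  rw [norm_exteriorSquare_orthogonal_mul_mul hO hQ,
    frobenius_norm_mul_of_mul_transpose_eq_one hQ,
    frobenius_norm_mul_of_transpose_mul_eq_one hO, norm_sq_diagonal] at h
  have hsum : ∑ i, s i ^ 2 ≤ Fintype.card ι * s i₀ ^ 2 := by
    simpa using Finset.sum_le_card_nsmul Finset.univ _ _ fun i _ ↦
      pow_le_pow_left₀ (hs i).le (hmax i) 2
  have hmul : s i₁ * s i₀ ≤ ε * Fintype.card ι * s i₀ * s i₀ := by
    calc s i₁ * s i₀ ≤ ‖exteriorSquare (diagonal s)‖ :=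
          (le_abs_self _).trans (abs_mul_le_norm_exteriorSquare_diagonal s hne)
      _ ≤ ε * (Fintype.card ι * s i₀ ^ 2) := h.trans (by gcongr)
      _ = ε * Fintype.card ι * s i₀ * s i₀ := by ring
  exact le_of_mul_le_mul_right hmul (hs i₀)

theorem sval_two_le {A : Matrix (Fin d) (Fin d) ℝ} (hA : A.det ≠ 0) (hd : 2 ≤ d) {ε : ℝ}
    (hε : 0 ≤ ε) (h : ‖exteriorSquare A‖ ≤ ε * ‖A‖ ^ 2) :
    sval A 2 ≤ ε * d * sval A 1 := by
  obtain ⟨O, Q, hO, hQ, hsvd⟩ := exists_singularValueDecomposition hA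
  rw [hsvd] at h
  simpa using le_mul_of_norm_exteriorSquare_le (i₀ := ⟨0, by omega⟩) (i₁ := ⟨1, by omega⟩) hO hQ
    (sval_succ_pos hA) (fun i ↦ antitone_sval_succ A (Fin.mk_le_of_le_val i.val.zero_le))
    (by simp) hε h

theorem sval_last_le {A : Matrix (Fin d) (Fin d) ℝ} (hA : A.det ≠ 0) (hd : 2 ≤ d) {ε : ℝ}
    (hε : 0 ≤ ε) (h : ‖exteriorSquare A⁻¹‖ ≤ ε * ‖A⁻¹‖ ^ 2) :
    sval A d ≤ ε * d * sval A (d - 1) := by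
  obtain ⟨O, Q, hO, hQ, hsvd⟩ := exists_singularValueDecomposition hA
  set s : Fin d → ℝ := fun i ↦ sval A (i + 1)
  have hpos : ∀ i, 0 < s i := sval_succ_pos hA
  have hinv : A⁻¹ = Qᵀ * diagonal (fun i ↦ (s i)⁻¹) * Oᵀ := by
    have hdiag : diagonal (fun i ↦ (s i)⁻¹) * diagonal s = 1 := by
      rw [diagonal_mul_diagonal, ← diagonal_one]
      exact congrArg diagonal (funext fun i ↦ inv_mul_cancel₀ (hpos i).ne')
    refine inv_eq_left_inv ?_
    calc Qᵀ * diagonal (fun i ↦ (s i)⁻¹) * Oᵀ * A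
        = Qᵀ * (diagonal (fun i ↦ (s i)⁻¹) * (Oᵀ * O) * diagonal s) * Q := by
          conv_lhs => rw [hsvd]
          simp only [Matrix.mul_assoc]
      _ = 1 := by rw [hO, Matrix.mul_one, hdiag, Matrix.mul_one, mul_eq_one_comm.mp hQ]
  rw [hinv] at h
  let last : Fin d := ⟨d - 1, by omega⟩
  let penultimate : Fin d := ⟨d - 2, by omega⟩
  have hle : (s penultimate)⁻¹ ≤ ε * d * (s last)⁻¹ := by
    simpa using le_mul_of_norm_exteriorSquare_le (i₀ := last) (i₁ := penultimate)
      (by rwa [transpose_transpose]) (by rwa [transpose_transpose])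
      (fun i ↦ inv_pos.mpr (hpos i))
      (fun i ↦ inv_anti₀ (hpos _) (antitone_sval_succ A (Fin.le_def.mpr (by grind))))
      (by simp [last, penultimate, Fin.ext_iff]; omega) hε h
  rw [inv_eq_one_div, ← div_eq_mul_inv, div_le_div_iff₀ (hpos _) (hpos _), one_mul] at hle
  simpa only [s, last, penultimate, show d - 1 + 1 = d by omega, show d - 2 + 1 = d - 1 by omega]
    using hle

end SingularValues

section Compound

open Set.powersetCard

variable {R ι : Type*} [CommRing R] [Fintype ι] [LinearOrder ι]

/-- The `k`-th compound of a matrix, that is, its `k`-th exterior power in the basis of wedge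
products of standard basis vectors; its entries are the `k × k` minors. -/
noncomputable def compound (k : ℕ) :
    Matrix ι ι R →* Matrix (Set.powersetCard ι k) (Set.powersetCard ι k) R where
  toFun A := LinearMap.toMatrix ((Pi.basisFun R ι).exteriorPower k)
    ((Pi.basisFun R ι).exteriorPower k) (exteriorPower.map k (toLin' A))
  map_one' := by rw [toLin'_one, exteriorPower.map_id, LinearMap.toMatrix_id]
  map_mul' A B := by
    rw [toLin'_mul, ← LinearMap.toMatrix_comp, exteriorPower.map_comp]

theorem compound_apply (k : ℕ) (A : Matrix ι ι R) (I J : Set.powersetCard ι k) :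
    compound k A I J = (A.submatrix (ofFinEmbEquiv.symm I) (ofFinEmbEquiv.symm J)).det := by
  rw [← det_transpose]
  change LinearMap.toMatrix _ _ _ I J = _
  rw [LinearMap.toMatrix_apply, exteriorPower.basis_apply,
    exteriorPower.map_apply_ιMulti_family, exteriorPower.basis_repr_apply,
    exteriorPower.ιMulti_family, exteriorPower.ιMultiDual_apply_ιMulti]
  congr 1
  ext i j
  simp

theorem compound_transpose (k : ℕ) (A : Matrix ι ι R) : compound k Aᵀ = (compound k A)ᵀ := by
  ext I J
  rw [transpose_apply, compound_apply, compound_apply, ← det_transpose, transpose_submatrix,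
    transpose_transpose]

theorem compound_diagonal (k : ℕ) (s : ι → R) :
    compound k (diagonal s) =
      diagonal fun I : Set.powersetCard ι k ↦ ∏ r, s (ofFinEmbEquiv.symm I r) := by
  ext I J
  change LinearMap.toMatrix _ _ _ I J = _
  have hsmul : (toLin' (diagonal s) ∘ Pi.basisFun R ι) ∘ ofFinEmbEquiv.symm J = fun r ↦
      s (ofFinEmbEquiv.symm J r) • (Pi.basisFun R ι ∘ ofFinEmbEquiv.symm J) r := by
    ext r i
    simp [Pi.single_apply]
  rw [LinearMap.toMatrix_apply, exteriorPower.basis_apply,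
    exteriorPower.map_apply_ιMulti_family, exteriorPower.ιMulti_family, hsmul,
    AlternatingMap.map_smul_univ, ← exteriorPower.ιMulti_family, map_smul,
    exteriorPower.basis_repr, diagonal_apply]
  obtain rfl | hIJ := eq_or_ne I J <;> simp [*]

end Compound

section ProductsOfAntitoneSequences

theorem val_add_sub_le_of_strictMono {k d : ℕ} {f : Fin k → Fin d} (hf : StrictMono f)
    {i j : Fin k} (hij : i ≤ j) : (f i : ℕ) + (j - i) ≤ f j := by
  have hcard := Finset.card_le_card_of_injOn f (s := Finset.Icc i j) (t := Finset.Icc (f i) (f j))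
    (fun r hr ↦ by
      rw [Finset.coe_Icc, Set.mem_Icc] at hr ⊢
      exact ⟨hf.monotone hr.1, hf.monotone hr.2⟩)
    hf.injective.injOn
  rw [Fin.card_Icc, Fin.card_Icc] at hcard
  have : (i : ℕ) ≤ j := hij
  have : (f i : ℕ) ≤ f j := hf.monotone hij
  omega

theorem val_le_of_strictMono {k d : ℕ} {f : Fin k → Fin d} (hf : StrictMono f) (i : Fin k) :
    (i : ℕ) ≤ f i := by
  have := val_add_sub_le_of_strictMono hf (i := ⟨0, i.pos⟩) (Fin.mk_le_of_le_val i.val.zero_le)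
  simp only at this
  omega

theorem prod_comp_le_prod_castAdd {k n : ℕ} {s : Fin (k + n) → ℝ} (hpos : ∀ i, 0 < s i)
    (hanti : Antitone s) (I : Fin k ↪o Fin (k + n)) :
    ∏ r, s (I r) ≤ ∏ r, s (Fin.castAdd n r) :=
  Finset.prod_le_prod (fun _ _ ↦ (hpos _).le) fun r _ ↦
    hanti (Fin.le_def.mpr (val_le_of_strictMono I.strictMono r))

variable {m n : ℕ} {s : Fin (m + 1 + (n + 1)) → ℝ}

theorem prod_comp_mul_le_prod_castAdd_mul (hpos : ∀ i, 0 < s i) (hanti : Antitone s)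
    {I : Fin (m + 1) ↪o Fin (m + 1 + (n + 1))} (hI : I ≠ Fin.castAddOrderEmb (n + 1)) :
    (∏ r, s (I r)) * s (Fin.castAdd (n + 1) (Fin.last m)) ≤
      (∏ r, s (Fin.castAdd (n + 1) r)) * s (Fin.natAdd (m + 1) 0) := by
  have hlast : m + 1 ≤ (I (Fin.last m) : ℕ) := by
    by_contra! hlt
    refine hI (RelEmbedding.ext fun r ↦ Fin.ext ?_)
    have hle := val_le_of_strictMono I.strictMono r
    have hsub := val_add_sub_le_of_strictMono I.strictMono (Fin.le_last r)
    simp only [Fin.val_last, Fin.castAddOrderEmb_apply, Fin.val_castAdd] at hsub ⊢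
    omega
  rw [Fin.prod_univ_castSucc, Fin.prod_univ_castSucc]
  have hinit : ∏ r : Fin m, s (I r.castSucc) ≤ ∏ r : Fin m, s (Fin.castAdd (n + 1) r.castSucc) :=
    Finset.prod_le_prod (fun r _ ↦ (hpos _).le) fun r _ ↦
      hanti (Fin.le_def.mpr (val_le_of_strictMono I.strictMono r.castSucc))
  have hlast' : s (I (Fin.last m)) ≤ s (Fin.natAdd (m + 1) 0) := hanti (Fin.le_def.mpr hlast)
  calc (∏ r : Fin m, s (I r.castSucc)) * s (I (Fin.last m)) * s (Fin.castAdd (n + 1) (Fin.last m))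
      ≤ (∏ r : Fin m, s (Fin.castAdd (n + 1) r.castSucc)) * s (Fin.natAdd (m + 1) 0) *
          s (Fin.castAdd (n + 1) (Fin.last m)) := by
        have := hpos (I (Fin.last m))
        have := hpos (Fin.castAdd (n + 1) (Fin.last m))
        have : 0 ≤ ∏ r : Fin m, s (Fin.castAdd (n + 1) r.castSucc) :=
          Finset.prod_nonneg fun r _ ↦ (hpos _).le
        gcongr
    _ = _ := by ring

theorem castAdd_last_le_sq_prod_castAdd_mul (hpos : ∀ i, 0 < s i) (hanti : Antitone s)
    (hprod : ∏ i, s i = 1) :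
    s (Fin.castAdd (n + 1) (Fin.last m)) ≤
      (∏ r, s (Fin.castAdd (n + 1) r)) ^ 2 * s (Fin.natAdd (m + 1) 0) := by
  set p := ∏ r, s (Fin.castAdd (n + 1) r)
  set x := s (Fin.castAdd (n + 1) (Fin.last m))
  set y := s (Fin.natAdd (m + 1) 0)
  have hx : 0 < x := hpos _
  have hy : 0 < y := hpos _
  have hyx : y ≤ x := hanti (Fin.le_def.mpr (by simp))
  have hp : 0 < p := Finset.prod_pos fun r _ ↦ hpos _
  have hhead : x ^ (m + 1) ≤ p := by
    simpa using Finset.prod_le_prod (s := Finset.univ) (fun (_ : Fin (m + 1)) _ ↦ hx.le)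
      fun r _ ↦ hanti (Fin.le_def.mpr (Fin.le_def.mp (Fin.le_last r)))
  have htail : ∏ r : Fin (n + 1), s (Fin.natAdd (m + 1) r) ≤ y ^ (n + 1) := by
    simpa using Finset.prod_le_prod (s := Finset.univ) (fun (r : Fin (n + 1)) _ ↦ (hpos _).le)
      fun r _ ↦ hanti (Fin.le_def.mpr (by simp : ((Fin.natAdd (m + 1) (0 : Fin (n + 1))) : ℕ) ≤
        Fin.natAdd (m + 1) r))
  have hone : 1 ≤ p * y ^ (n + 1) := by
    rw [← hprod, Fin.prod_univ_add]
    exact mul_le_mul_of_nonneg_left htail hp.le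
  have hpy : 1 ≤ p * y := by
    obtain hy1 | hy1 := le_total y 1
    · exact hone.trans (by gcongr; exact pow_le_of_le_one hy.le hy1 n.succ_ne_zero)
    · have : 1 ≤ p := (one_le_pow₀ (hy1.trans hyx)).trans hhead
      nlinarith
  have hxp : x ≤ p := by
    obtain hx1 | hx1 := le_total x 1
    · nlinarith [hyx.trans hx1]
    · exact (le_self_pow₀ hx1 m.succ_ne_zero).trans hhead
  nlinarith

end ProductsOfAntitoneSequences

section CompoundEstimates

open Set.powersetCard

theorem norm_compound_eq_norm_compound_diagonal {d : ℕ} {A : Matrix (Fin d) (Fin d) ℝ} (k : ℕ)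
    (hA : A.det ≠ 0) :
    ‖compound k A‖ = ‖compound k (diagonal fun i : Fin d ↦ sval A (i + 1))‖ ∧
    ‖exteriorSquare (compound k A)‖ =
      ‖exteriorSquare (compound k (diagonal fun i : Fin d ↦ sval A (i + 1)))‖ := by
  obtain ⟨O, Q, hO, hQ, hsvd⟩ := exists_singularValueDecomposition hA
  have hO' : (compound k O)ᵀ * compound k O = 1 := by
    rw [← compound_transpose, ← map_mul, hO, map_one]
  have hQ' : compound k Q * (compound k Q)ᵀ = 1 := by
    rw [← compound_transpose, ← map_mul, hQ, map_one]
  have hcomp : compound k A =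
      compound k O * compound k (diagonal fun i : Fin d ↦ sval A (i + 1)) * compound k Q := by
    rw [← map_mul, ← map_mul, ← hsvd]
  rw [hcomp, norm_exteriorSquare_orthogonal_mul_mul hO' hQ',
    frobenius_norm_mul_of_mul_transpose_eq_one hQ',
    frobenius_norm_mul_of_transpose_mul_eq_one hO']
  exact ⟨rfl, rfl⟩

theorem prod_castAdd_le_norm_compound_diagonal {k n : ℕ} (s : Fin (k + n) → ℝ) :
    ∏ r, s (Fin.castAdd n r) ≤ ‖compound k (diagonal s)‖ := by
  have hentry := abs_entry_le_frobenius_norm (compound k (diagonal s))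
    (ofFinEmbEquiv (Fin.castAddOrderEmb n)) (ofFinEmbEquiv (Fin.castAddOrderEmb n))
  rw [compound_diagonal, diagonal_apply_eq, Equiv.symm_apply_apply] at hentry
  rw [compound_diagonal]
  exact (le_abs_self _).trans hentry

theorem norm_exteriorSquare_compound_diagonal_mul_le {m n : ℕ} {s : Fin (m + 1 + (n + 1)) → ℝ}
    (hpos : ∀ i, 0 < s i) (hanti : Antitone s) :
    ‖exteriorSquare (compound (m + 1) (diagonal s))‖ * s (Fin.castAdd (n + 1) (Fin.last m)) ≤
      Fintype.card (Set.powersetCard (Fin (m + 1 + (n + 1))) (m + 1)) *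
        (‖compound (m + 1) (diagonal s)‖ ^ 2 * s (Fin.natAdd (m + 1) 0)) := by
  have hnorm := prod_castAdd_le_norm_compound_diagonal s
  set p := ∏ r, s (Fin.castAdd (n + 1) r)
  set x := s (Fin.castAdd (n + 1) (Fin.last m))
  set y := s (Fin.natAdd (m + 1) 0)
  have hx : 0 < x := hpos _
  have hy : 0 < y := hpos _
  have hp : 0 < p := Finset.prod_pos fun r _ ↦ hpos _
  let t (I : Set.powersetCard (Fin (m + 1 + (n + 1))) (m + 1)) : ℝ :=
    ∏ r, s (ofFinEmbEquiv.symm I r)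
  have ht (I) : 0 < t I := Finset.prod_pos fun r _ ↦ hpos _
  have htp (I) : t I ≤ p := prod_comp_le_prod_castAdd hpos hanti _
  have hty (I) (hI : ofFinEmbEquiv.symm I ≠ Fin.castAddOrderEmb (n + 1)) : t I ≤ p * y / x :=
    (le_div_iff₀ hx).mpr (prod_comp_mul_le_prod_castAdd_mul hpos hanti hI)
  have hpair (I J) (hIJ : I ≠ J) : |t I * t J| ≤ p ^ 2 * y / x := by
    rw [abs_of_pos (mul_pos (ht I) (ht J))]
    by_cases hI : ofFinEmbEquiv.symm I = Fin.castAddOrderEmb (n + 1)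
    · have hJ : ofFinEmbEquiv.symm J ≠ Fin.castAddOrderEmb (n + 1) := fun hJ ↦
        hIJ (ofFinEmbEquiv.symm.injective (hI.trans hJ.symm))
      calc t I * t J ≤ p * (p * y / x) := mul_le_mul (htp I) (hty J hJ) (ht J).le hp.le
        _ = p ^ 2 * y / x := by ring
    · calc t I * t J ≤ p * y / x * p := mul_le_mul (hty I hI) (htp J) (ht J).le (by positivity)
        _ = p ^ 2 * y / x := by ring
  calc ‖exteriorSquare (compound (m + 1) (diagonal s))‖ * x
      ≤ Fintype.card (Set.powersetCard (Fin (m + 1 + (n + 1))) (m + 1)) * (p ^ 2 * y / x) * x := by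
        rw [compound_diagonal]
        gcongr
        exact norm_exteriorSquare_diagonal_le (by positivity) hpair
    _ = Fintype.card (Set.powersetCard (Fin (m + 1 + (n + 1))) (m + 1)) * (p ^ 2 * y) := by
        field_simp
    _ ≤ _ := by gcongr

theorem castAdd_last_le_norm_compound_diagonal_sq_mul {m n : ℕ} {s : Fin (m + 1 + (n + 1)) → ℝ}
    (hpos : ∀ i, 0 < s i) (hanti : Antitone s) (hprod : ∏ i, s i = 1) :
    s (Fin.castAdd (n + 1) (Fin.last m)) ≤
      ‖compound (m + 1) (diagonal s)‖ ^ 2 * s (Fin.natAdd (m + 1) 0) := by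
  have hp : 0 ≤ ∏ r, s (Fin.castAdd (n + 1) r) := Finset.prod_nonneg fun r _ ↦ (hpos _).le
  refine (castAdd_last_le_sq_prod_castAdd_mul hpos hanti hprod).trans ?_
  gcongr
  · exact (hpos _).le
  · exact prod_castAdd_le_norm_compound_diagonal s

variable {d k : ℕ} {A : Matrix (Fin d) (Fin d) ℝ}

theorem norm_exteriorSquare_compound_mul_sval_le (hA : A.det ≠ 0) (hk : 1 ≤ k) (hkd : k < d) :
    ‖exteriorSquare (compound k A)‖ * sval A k ≤
      Fintype.card (Set.powersetCard (Fin d) k) * (‖compound k A‖ ^ 2 * sval A (k + 1)) := by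
  obtain ⟨m, rfl⟩ := Nat.exists_eq_add_of_le' hk
  obtain ⟨n, rfl⟩ : ∃ n, d = m + 1 + (n + 1) := ⟨d - (m + 2), by omega⟩
  rw [(norm_compound_eq_norm_compound_diagonal (m + 1) hA).1,
    (norm_compound_eq_norm_compound_diagonal (m + 1) hA).2]
  exact norm_exteriorSquare_compound_diagonal_mul_le (sval_succ_pos hA) (antitone_sval_succ A)

theorem sval_le_norm_compound_sq_mul (hA : A.det = 1) (hk : 1 ≤ k) (hkd : k < d) :
    sval A k ≤ ‖compound k A‖ ^ 2 * sval A (k + 1) := by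
  have hA' : A.det ≠ 0 := hA ▸ one_ne_zero
  obtain ⟨m, rfl⟩ := Nat.exists_eq_add_of_le' hk
  obtain ⟨n, rfl⟩ : ∃ n, d = m + 1 + (n + 1) := ⟨d - (m + 2), by omega⟩
  rw [(norm_compound_eq_norm_compound_diagonal (m + 1) hA').1]
  exact castAdd_last_le_norm_compound_diagonal_sq_mul (sval_succ_pos hA') (antitone_sval_succ A)
    (prod_sval_eq_one hA)

end CompoundEstimates

section ExponentialGap

open Asymptotics Filter

universe u

variable {Γ κ : Type*} {ι : Type u} [Fintype ι] {ℓ : Γ → ℕ} {a : ℝ}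

/-- The ratio of the first two singular values of `R γ` is at least of order `exp (a * ℓ γ)`. Since
`‖exteriorSquare A‖ / ‖A‖ ^ 2` and `σ₂ / σ₁` agree up to constants, this is expressed without
singular values. -/
def HasExpGap (ℓ : Γ → ℕ) (a : ℝ) (R : Γ → Matrix ι ι ℝ) : Prop :=
  (fun γ ↦ exteriorSquare (R γ)) =O[⊤] fun γ ↦ Real.exp (-a * ℓ γ) * ‖R γ‖ ^ 2

theorem isBigO_of_isBigO_exp_mul_norm [Fintype κ] {U : Γ → Matrix ι ι ℝ} {r : Γ → Matrix κ κ ℝ}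
    (ha : 0 ≤ a)
    (hr : r =O[⊤] fun γ ↦ Real.exp (-a * ℓ γ) * ‖U γ‖) : r =O[⊤] U := by
  refine hr.trans <| .of_bound' <| .of_forall fun γ ↦ ?_
  rw [Real.norm_of_nonneg (by positivity)]
  refine mul_le_of_le_one_left (norm_nonneg _) (Real.exp_le_one_iff.mpr ?_)
  rw [neg_mul, neg_nonpos]
  positivity

section Compound

variable {d k : ℕ} {r : Γ → Matrix (Fin d) (Fin d) ℝ} {C : ℝ}

theorem exp_mul_sval_succ_le_of_sub_le_log_sub_log {A : Matrix (Fin d) (Fin d) ℝ} (hA : A.det ≠ 0)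
    (hk : 1 ≤ k) (hkd : k < d) {t : ℝ}
    (ht : t - C ≤ Real.log (sval A k) - Real.log (sval A (k + 1))) :
    Real.exp t * sval A (k + 1) ≤ Real.exp C * sval A k := by
  obtain ⟨m, rfl⟩ := Nat.exists_eq_add_of_le' hk
  have hx : 0 < sval A (m + 1) := sval_succ_pos hA ⟨m, by omega⟩
  have hy : 0 < sval A (m + 1 + 1) := sval_succ_pos hA ⟨m + 1, hkd⟩
  rw [← Real.log_le_log_iff (by positivity) (by positivity),
    Real.log_mul (Real.exp_ne_zero t) hy.ne', Real.log_mul (Real.exp_ne_zero C) hx.ne',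
    Real.log_exp, Real.log_exp]
  linarith

theorem hasExpGap_compound (hdet : ∀ γ, (r γ).det = 1) (hk : 1 ≤ k) (hkd : k < d)
    (hlog : ∀ γ, a * ℓ γ - C ≤ Real.log (sval (r γ) k) - Real.log (sval (r γ) (k + 1))) :
    HasExpGap ℓ a fun γ ↦ compound k (r γ) := by
  refine .of_bound (Fintype.card (Set.powersetCard (Fin d) k) * Real.exp C) <| .of_forall fun γ ↦ ?_
  have hA : (r γ).det ≠ 0 := hdet γ ▸ one_ne_zero
  have hgap := exp_mul_sval_succ_le_of_sub_le_log_sub_log hA hk hkd (hlog γ)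
  have hcomp := norm_exteriorSquare_compound_mul_sval_le hA hk hkd
  have hpos : 0 < sval (r γ) k := by
    simpa [Nat.sub_add_cancel hk] using sval_succ_pos hA ⟨k - 1, by omega⟩
  rw [Real.norm_of_nonneg (by positivity), neg_mul, Real.exp_neg]
  refine le_of_mul_le_mul_right ?_ (mul_pos hpos (Real.exp_pos (a * ℓ γ)))
  calc ‖exteriorSquare (compound k (r γ))‖ * (sval (r γ) k * Real.exp (a * ℓ γ))
      ≤ Fintype.card (Set.powersetCard (Fin d) k) * ‖compound k (r γ)‖ ^ 2 *
          (Real.exp (a * ℓ γ) * sval (r γ) (k + 1)) := by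
        nlinarith [Real.exp_pos (a * ℓ γ)]
    _ ≤ Fintype.card (Set.powersetCard (Fin d) k) * ‖compound k (r γ)‖ ^ 2 *
          (Real.exp C * sval (r γ) k) := by gcongr
    _ = _ := by field_simp

theorem exp_isBigO_compound (hdet : ∀ γ, (r γ).det = 1) (hk : 1 ≤ k) (hkd : k < d)
    (hlog : ∀ γ, a * ℓ γ - C ≤ Real.log (sval (r γ) k) - Real.log (sval (r γ) (k + 1))) :
    (fun γ ↦ Real.exp (a / 2 * ℓ γ)) =O[⊤] fun γ ↦ compound k (r γ) := by
  refine .of_bound (Real.exp (C / 2)) <| .of_forall fun γ ↦ ?_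
  have hA : (r γ).det ≠ 0 := hdet γ ▸ one_ne_zero
  have hgap := exp_mul_sval_succ_le_of_sub_le_log_sub_log hA hk hkd (hlog γ)
  have hcomp := sval_le_norm_compound_sq_mul (hdet γ) hk hkd
  have hpos : 0 < sval (r γ) (k + 1) := sval_succ_pos hA ⟨k, hkd⟩
  have hsq : Real.exp (a * ℓ γ) ≤ Real.exp C * ‖compound k (r γ)‖ ^ 2 := by
    refine le_of_mul_le_mul_right (hgap.trans ?_) hpos
    rw [mul_assoc]
    gcongr
  rw [Real.norm_of_nonneg (Real.exp_pos _).le]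
  refine le_of_sq_le_sq ?_ (by positivity)
  have hhalf (x : ℝ) : Real.exp (x / 2) ^ 2 = Real.exp x := by
    rw [pow_two, ← Real.exp_add, add_halves]
  rwa [mul_pow, hhalf, div_mul_eq_mul_div, hhalf]

end Compound

section TensorPowers

variable [DecidableEq ι]

/-- The tensor square `A ↦ A ⊗ₖ A`, as a representation of the monoid of matrices. -/
def kroneckerSquare : Matrix ι ι ℝ →* Matrix (ι × ι) (ι × ι) ℝ where
  toFun A := A ⊗ₖ A
  map_one' := one_kronecker_one
  map_mul' A B := mul_kronecker_mul A B A B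

theorem norm_kroneckerSquare (A : Matrix ι ι ℝ) :
    ‖kroneckerSquare A‖ = ‖A‖ ^ 2 :=
  (frobenius_norm_kronecker A A).trans (pow_two _).symm

theorem HasExpGap.kroneckerSquare {R : Γ → Matrix ι ι ℝ} (hR : HasExpGap ℓ a R) :
    HasExpGap ℓ a fun γ ↦ kroneckerSquare (R γ) := by
  have hle : (fun γ ↦ exteriorSquare (R γ ⊗ₖ R γ)) =O[⊤]
      fun γ ↦ ‖R γ‖ ^ 2 * ‖exteriorSquare (R γ)‖ :=
    .of_bound 2 <| .of_forall fun γ ↦ by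
      simpa [mul_assoc] using norm_exteriorSquare_kronecker_self_le (R γ)
  refine hle.trans (((isBigO_refl (fun γ ↦ ‖R γ‖ ^ 2) ⊤).mul hR.norm_left).congr_right fun γ ↦ ?_)
  rw [norm_kroneckerSquare]
  ring

theorem exists_hasExpGap_exp_isBigO [Group Γ] (R : Γ →* Matrix ι ι ℝ)
    (hR : HasExpGap ℓ a R) {b : ℝ} (hb : 0 < b)
    (hgrowth : (fun γ ↦ Real.exp (b * ℓ γ)) =O[⊤] R) (B : ℝ) :
    ∃ (κ : Type u) (_ : Fintype κ) (_ : DecidableEq κ) (U : Γ →* Matrix κ κ ℝ),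
      HasExpGap ℓ a U ∧ (fun γ ↦ Real.exp (B * ℓ γ)) =O[⊤] U := by
  have hpow (n : ℕ) : ∃ (κ : Type u) (_ : Fintype κ) (_ : DecidableEq κ) (U : Γ →* Matrix κ κ ℝ),
      HasExpGap ℓ a U ∧ (fun γ ↦ Real.exp (2 ^ n * b * ℓ γ)) =O[⊤] U := by
    induction n with
    | zero => exact ⟨ι, _, _, R, hR, by simpa using hgrowth⟩
    | succ n ih =>
      obtain ⟨κ, _, _, U, hgap, hU⟩ := ih
      refine ⟨κ × κ, _, inferInstance, kroneckerSquare.comp U, hgap.kroneckerSquare, ?_⟩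
      refine .of_norm_right (((hU.norm_right.pow 2).congr_left fun γ ↦ ?_).congr_right fun γ ↦ ?_)
      · rw [← Real.exp_nat_mul]
        push_cast
        ring_nf
      · exact (norm_kroneckerSquare (U γ)).symm
  obtain ⟨n, hn⟩ := pow_unbounded_of_one_lt (B / b) one_lt_two
  obtain ⟨κ, _, _, U, hgap, hU⟩ := hpow n
  refine ⟨κ, _, _, U, hgap, .trans (.of_norm_le fun γ ↦ ?_) hU⟩
  rw [Real.norm_of_nonneg (Real.exp_pos _).le]
  gcongr
  exact ((div_lt_iff₀ hb).mp hn).le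

end TensorPowers

section DirectSum

variable [DecidableEq ι] [Fintype κ] [DecidableEq κ] [Monoid Γ]

/-- The direct sum of two representations. -/
def directSum (U : Γ →* Matrix ι ι ℝ)
    (r : Γ →* Matrix κ κ ℝ) : Γ →* Matrix (ι ⊕ κ) (ι ⊕ κ) ℝ where
  toFun γ := fromBlocks (U γ) 0 0 (r γ)
  map_one' := by rw [map_one, map_one, fromBlocks_one]
  map_mul' γ γ' := by simp [fromBlocks_multiply]

theorem norm_directSum_sq (U : Γ →* Matrix ι ι ℝ) (r : Γ →* Matrix κ κ ℝ) (γ : Γ) :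
    ‖directSum U r γ‖ ^ 2 = ‖U γ‖ ^ 2 + ‖r γ‖ ^ 2 :=
  frobenius_norm_sq_fromBlocks_diagonal (U γ) (r γ)

theorem norm_le_norm_directSum (U : Γ →* Matrix ι ι ℝ) (r : Γ →* Matrix κ κ ℝ) (γ : Γ) :
    ‖U γ‖ ≤ ‖directSum U r γ‖ :=
  le_of_sq_le_sq (by rw [norm_directSum_sq]; exact le_add_of_nonneg_right (sq_nonneg _))
    (norm_nonneg _)

theorem norm_directSum_le (U : Γ →* Matrix ι ι ℝ) (r : Γ →* Matrix κ κ ℝ) (γ : Γ) :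
    ‖directSum U r γ‖ ≤ ‖U γ‖ + ‖r γ‖ := by
  refine le_of_sq_le_sq ?_ (by positivity)
  rw [norm_directSum_sq, add_sq]
  nlinarith [norm_nonneg (U γ), norm_nonneg (r γ)]

theorem norm_exteriorSquare_directSum_le (U : Γ →* Matrix ι ι ℝ) (r : Γ →* Matrix κ κ ℝ) (γ : Γ) :
    ‖exteriorSquare (directSum U r γ)‖ ≤
      ‖exteriorSquare (U γ)‖ + ‖r γ‖ * ‖r γ‖ + ‖U γ‖ * ‖r γ‖ := by
  refine le_of_sq_le_sq ?_ (by positivity)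
  have hsq := norm_exteriorSquare_fromBlocks_diagonal_sq (U γ) (r γ)
  have hr := norm_exteriorSquare_le (r γ)
  calc ‖exteriorSquare (directSum U r γ)‖ ^ 2
      = ‖exteriorSquare (U γ)‖ ^ 2 + ‖exteriorSquare (r γ)‖ ^ 2 + (‖U γ‖ * ‖r γ‖) ^ 2 := hsq
    _ ≤ ‖exteriorSquare (U γ)‖ ^ 2 + (‖r γ‖ * ‖r γ‖) ^ 2 + (‖U γ‖ * ‖r γ‖) ^ 2 := by
        rw [← pow_two ‖r γ‖]
        gcongr
    _ ≤ _ := by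
        have hU : 0 ≤ ‖exteriorSquare (U γ)‖ := norm_nonneg _
        have hrr : 0 ≤ ‖r γ‖ * ‖r γ‖ := by positivity
        have hUr : 0 ≤ ‖U γ‖ * ‖r γ‖ := by positivity
        nlinarith [mul_nonneg hU hrr, mul_nonneg hU hUr, mul_nonneg hrr hUr]

theorem directSum_isBigO {U : Γ →* Matrix ι ι ℝ} {r : Γ →* Matrix κ κ ℝ} (ha : 0 ≤ a)
    (hr : r =O[⊤] fun γ ↦ Real.exp (-a * ℓ γ) * ‖U γ‖) : directSum U r =O[⊤] U :=
  .trans (.of_norm_le fun γ ↦ norm_directSum_le U r γ)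
    ((isBigO_refl U ⊤).norm_left.add (isBigO_of_isBigO_exp_mul_norm ha hr).norm_left)

theorem HasExpGap.directSum {U : Γ →* Matrix ι ι ℝ} {r : Γ →* Matrix κ κ ℝ}
    (hU : HasExpGap ℓ a U) (ha : 0 ≤ a) (hr : r =O[⊤] fun γ ↦ Real.exp (-a * ℓ γ) * ‖U γ‖) :
    HasExpGap ℓ a (directSum U r) := by
  have hrU : r =O[⊤] fun γ ↦ ‖U γ‖ := (isBigO_of_isBigO_exp_mul_norm ha hr).norm_right
  have hrr : (fun γ ↦ ‖r γ‖ * ‖r γ‖) =O[⊤] fun γ ↦ Real.exp (-a * ℓ γ) * ‖U γ‖ ^ 2 :=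
    (hr.norm_left.mul hrU.norm_left).congr_right fun γ ↦ by ring
  have hUr : (fun γ ↦ ‖U γ‖ * ‖r γ‖) =O[⊤] fun γ ↦ Real.exp (-a * ℓ γ) * ‖U γ‖ ^ 2 :=
    ((isBigO_refl (fun γ ↦ ‖U γ‖) ⊤).mul hr.norm_left).congr_right fun γ ↦ by ring
  have hsum : (fun γ ↦ exteriorSquare (FreeProductAnosov.directSum U r γ)) =O[⊤]
      fun γ ↦ Real.exp (-a * ℓ γ) * ‖U γ‖ ^ 2 :=
    .trans (.of_norm_le fun γ ↦ norm_exteriorSquare_directSum_le U r γ)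
      ((hU.norm_left.add hrr).add hUr)
  refine hsum.trans (.of_norm_le fun γ ↦ ?_)
  rw [Real.norm_of_nonneg (by positivity)]
  gcongr
  exact norm_le_norm_directSum U r γ

end DirectSum

end ExponentialGap

section GenericVectors

open MeasureTheory

variable {ι κ : Type*} [Fintype ι]

theorem ae_dotProduct_ne {w : ι → ℝ} (hw : w ≠ 0) (c : ℝ) : ∀ᵐ y : ι → ℝ, y ⬝ᵥ w ≠ c := by
  let hyperplane : AffineSubspace ℝ (ι → ℝ) :=
    (affineSpan ℝ {c}).comap ((dotProductBilin ℝ ℝ).flip w).toAffineMap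
  have hmem (y : ι → ℝ) : y ∈ hyperplane ↔ y ⬝ᵥ w = c := by
    simp [hyperplane, AffineSubspace.mem_comap]
  have hne : hyperplane ≠ ⊤ := by
    intro htop
    have hc : 0 ⬝ᵥ w = c := (hmem 0).mp (htop ▸ AffineSubspace.mem_top ℝ _ 0)
    have hw' : w ⬝ᵥ w = c := (hmem w).mp (htop ▸ AffineSubspace.mem_top ℝ _ w)
    exact hw (dotProduct_self_eq_zero.mp (hw'.trans (hc.symm.trans (zero_dotProduct w))))
  refine measure_mono_null (fun y hy ↦ ?_) (Measure.addHaar_affineSubspace volume hyperplane hne)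
  exact (hmem y).mpr (not_not.mp hy)

theorem ae_mulVec_ne_zero {D : Matrix κ ι ℝ} (hD : D ≠ 0) : ∀ᵐ x : ι → ℝ, D *ᵥ x ≠ 0 := by
  obtain ⟨i, hi⟩ : ∃ i, D i ≠ 0 := Function.ne_iff.mp hD
  filter_upwards [ae_dotProduct_ne hi 0] with x hx h
  exact hx ((dotProduct_comm _ _).trans (congrFun h i))

theorem exists_forall_dotProduct_mulVec_ne [Fintype κ] {Γ : Type*} [Countable Γ]
    (D : Γ → Matrix κ ι ℝ) (c : Γ → ℝ) :
    ∃ (y : κ → ℝ) (x : ι → ℝ), ∀ γ, D γ ≠ 0 → y ⬝ᵥ D γ *ᵥ x ≠ c γ := by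
  obtain ⟨x, hx⟩ := (ae_all_iff.mpr fun γ : {γ // D γ ≠ 0} ↦ ae_mulVec_ne_zero γ.2).exists
  obtain ⟨y, hy⟩ := (ae_all_iff.mpr fun γ : {γ // D γ ≠ 0} ↦ ae_dotProduct_ne (hx γ) (c γ)).exists
  exact ⟨y, x, fun γ hγ ↦ hy ⟨γ, hγ⟩⟩

end GenericVectors

section VisibleCoefficient

open Asymptotics Filter

variable {Γ ι κ : Type*} [Fintype ι] [DecidableEq ι] [Fintype κ] [DecidableEq κ] [Group Γ]

/-- The matrix coefficient `γ ↦ f ⬝ᵥ R γ *ᵥ v` differs from its value at the identity by at least a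
fixed proportion of `‖R γ‖`, for every `γ ≠ 1`. -/
def HasVisibleCoefficient (R : Γ →* Matrix ι ι ℝ) (f v : ι → ℝ) : Prop :=
  ∃ C > 0, ∀ γ ≠ 1, ‖R γ‖ ≤ C * |f ⬝ᵥ R γ *ᵥ v - f ⬝ᵥ v|

theorem vec_one_dotProduct_kroneckerSquare_mulVec (A : Matrix ι ι ℝ) :
    vec (1 : Matrix ι ι ℝ) ⬝ᵥ kroneckerSquare A *ᵥ vec 1 = ‖A‖ ^ 2 := by
  change _ ⬝ᵥ (A ⊗ₖ A) *ᵥ _ = _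
  rw [kronecker_mulVec_vec, vec_dotProduct_vec, transpose_one, one_mul, mul_one, trace_mul_comm,
    frobenius_norm_sq_eq_trace]

theorem directSum_kroneckerSquare_coefficient (u : Γ →* Matrix ι ι ℝ) (r : Γ →* Matrix κ κ ℝ)
    (x y : κ → ℝ) (γ : Γ) :
    Sum.elim (vec 1) y ⬝ᵥ directSum (kroneckerSquare.comp u) r γ *ᵥ Sum.elim (vec 1) x =
      ‖u γ‖ ^ 2 + y ⬝ᵥ r γ *ᵥ x := by
  change _ ⬝ᵥ fromBlocks (kroneckerSquare (u γ)) 0 0 (r γ) *ᵥ _ = _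
  rw [fromBlocks_mulVec, Sum.elim_comp_inl, Sum.elim_comp_inr, zero_mulVec, zero_mulVec, add_zero,
    zero_add, sumElim_dotProduct_sumElim, vec_one_dotProduct_kroneckerSquare_mulVec]

theorem isBigO_dotProduct_mulVec {α : Type*} (l : Filter α) (r : α → Matrix κ κ ℝ)
    (x y : κ → ℝ) : (fun γ ↦ y ⬝ᵥ r γ *ᵥ x) =O[l] r := by
  simp only [dotProduct, mulVec]
  refine IsBigO.fun_sum fun i _ ↦ .const_mul_left (.fun_sum fun j _ ↦ ?_) _
  have hentry : (fun γ ↦ r γ i j) =O[l] r :=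
    .of_norm_right (.of_norm_le fun γ ↦ abs_entry_le_frobenius_norm (r γ) i j)
  exact (hentry.const_mul_left (x j)).congr_left fun γ ↦ mul_comm _ _

/-- The coefficient is `‖u γ‖ ^ 2 + y ⬝ᵥ r γ *ᵥ x`: the first term dominates for all but finitely
many `γ`, and a generic choice of `x` and `y` takes care of the others. -/
theorem exists_hasVisibleCoefficient_directSum [Countable Γ] {u : Γ →* Matrix ι ι ℝ}
    {r : Γ →* Matrix κ κ ℝ} (hinj : Function.Injective r)
    (hu : Tendsto (fun γ ↦ ‖u γ‖ ^ 2) cofinite atTop) (hr : r =o[cofinite] fun γ ↦ ‖u γ‖ ^ 2) :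
    ∃ f v, HasVisibleCoefficient (directSum (kroneckerSquare.comp u) r) f v := by
  obtain ⟨y, x, hyx⟩ := exists_forall_dotProduct_mulVec_ne (fun γ ↦ r γ - 1)
    fun γ ↦ ‖u 1‖ ^ 2 - ‖u γ‖ ^ 2
  let R := directSum (kroneckerSquare.comp u) r
  refine ⟨Sum.elim (vec 1) y, Sum.elim (vec 1) x, ?_⟩
  set f : ι × ι ⊕ κ → ℝ := Sum.elim (vec 1) y
  set v : ι × ι ⊕ κ → ℝ := Sum.elim (vec 1) x
  have hcoeff (γ) : f ⬝ᵥ R γ *ᵥ v = ‖u γ‖ ^ 2 + y ⬝ᵥ r γ *ᵥ x :=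
    directSum_kroneckerSquare_coefficient u r x y γ
  have hone : f ⬝ᵥ v = ‖u 1‖ ^ 2 + y ⬝ᵥ x := by simpa using hcoeff 1
  have hlittle : (fun γ ↦ f ⬝ᵥ v - y ⬝ᵥ r γ *ᵥ x) =o[cofinite] fun γ ↦ ‖u γ‖ ^ 2 :=
    .sub (isLittleO_const_left.mpr (.inr (tendsto_norm_atTop_atTop.comp hu)))
      ((isBigO_dotProduct_mulVec _ r x y).trans_isLittleO hr)
  have hR : R =O[cofinite] fun γ ↦ ‖u γ‖ ^ 2 := by
    refine .trans (.of_norm_le fun γ ↦ norm_directSum_le _ r γ) <| .add ?_ hr.isBigO.norm_left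
    exact (isBigO_refl _ _).congr_left fun γ ↦ (norm_kroneckerSquare (u γ)).symm
  have hbig : R =O[cofinite] fun γ ↦ f ⬝ᵥ R γ *ᵥ v - f ⬝ᵥ v :=
    (hR.trans hlittle.right_isBigO_sub).congr_right fun γ ↦ by rw [hcoeff]; ring
  obtain ⟨C, hC, hbound⟩ := bound_of_isBigO_cofinite hbig
  refine ⟨C, hC, fun γ hγ ↦ hbound fun hzero ↦ hyx γ (sub_ne_zero.mpr fun h ↦ ?_) ?_⟩
  · exact hγ (hinj (h.trans (map_one r).symm))
  · rw [sub_mulVec, one_mulVec, dotProduct_sub]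
    rw [hcoeff, hone] at hzero
    linarith

theorem countable_of_tendsto_cofinite_atTop {α : Type*} {ℓ : α → ℕ}
    (hℓ : Tendsto ℓ cofinite atTop) : Countable α := by
  have hker : (atTop : Filter ℕ).ker = ∅ :=
    Set.eq_empty_of_forall_notMem fun n hn ↦
      lt_irrefl n (Filter.mem_ker.mp hn _ (Ioi_mem_atTop n))
  simpa [hker, Set.countable_univ_iff] using hℓ.countable_compl_preimage_ker

variable {ℓ : Γ → ℕ} {a b : ℝ}

theorem exists_hasExpGap_hasVisibleCoefficient {d k : ℕ} (r : Γ →* Matrix (Fin d) (Fin d) ℝ)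
    (hinj : Function.Injective r) (hdet : ∀ γ, (r γ).det = 1) (hk : 1 ≤ k) (hkd : k < d) {C : ℝ}
    (hlog : ∀ γ, a * ℓ γ - C ≤ Real.log (sval (r γ) k) - Real.log (sval (r γ) (k + 1)))
    (ha : 0 < a) (hℓ : Tendsto ℓ cofinite atTop) (hb : 0 ≤ b)
    (hr : r =O[⊤] fun γ ↦ Real.exp (b * ℓ γ)) :
    ∃ (ι : Type) (_ : Fintype ι) (_ : DecidableEq ι) (R : Γ →* Matrix ι ι ℝ) (f v : ι → ℝ),
      HasExpGap ℓ a R ∧ (fun γ ↦ Real.exp (a * ℓ γ)) =O[⊤] R ∧ HasVisibleCoefficient R f v := by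
  have : Countable Γ := countable_of_tendsto_cofinite_atTop hℓ
  have hℓ' : Tendsto (fun γ ↦ (ℓ γ : ℝ)) cofinite atTop := tendsto_natCast_atTop_atTop.comp hℓ
  obtain ⟨ι, _, _, u, hgap, hu⟩ := exists_hasExpGap_exp_isBigO ((compound k).comp r)
    (hasExpGap_compound hdet hk hkd hlog) (half_pos ha) (exp_isBigO_compound hdet hk hkd hlog)
    ((a + b) / 2)
  have husq : (fun γ ↦ Real.exp ((a + b) * ℓ γ)) =O[⊤] fun γ ↦ ‖u γ‖ ^ 2 :=
    (hu.norm_right.pow 2).congr_left fun γ ↦ by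
      rw [pow_two, ← Real.exp_add]
      ring_nf
  have hru : r =O[⊤] fun γ ↦ Real.exp (-a * ℓ γ) * ‖u γ‖ ^ 2 :=
    hr.trans <| ((isBigO_refl (fun γ ↦ Real.exp (-a * ℓ γ)) ⊤).mul husq).congr_left fun γ ↦ by
      rw [← Real.exp_add]
      ring_nf
  have hexp : (fun γ ↦ Real.exp (-a * ℓ γ)) =o[cofinite] fun _ ↦ (1 : ℝ) :=
    (isLittleO_one_iff ℝ).mpr <| Real.tendsto_exp_atBot.comp <|
      hℓ'.const_mul_atTop_of_neg (neg_neg_of_pos ha)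
  have hru' : r =o[cofinite] fun γ ↦ ‖u γ‖ ^ 2 :=
    (hru.mono le_top).trans_isLittleO <|
      (hexp.mul_isBigO (isBigO_refl (fun γ ↦ ‖u γ‖ ^ 2) _)).congr_right fun γ ↦ one_mul _
  have hutop : Tendsto (fun γ ↦ ‖u γ‖ ^ 2) cofinite atTop := by
    have hexptop : Tendsto (fun γ ↦ Real.exp ((a + b) * ℓ γ)) cofinite atTop :=
      Real.tendsto_exp_atTop.comp (hℓ'.const_mul_atTop (by positivity))
    simpa using (husq.mono le_top).trans_tendsto_norm_atTop
      (tendsto_norm_atTop_atTop.comp hexptop)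
  obtain ⟨f, v, hfv⟩ := exists_hasVisibleCoefficient_directSum hinj hutop hru'
  refine ⟨_, _, _, directSum (kroneckerSquare.comp u) r, f, v, ?_, ?_, hfv⟩
  · exact hgap.kroneckerSquare.directSum ha.le
      (hru.congr_right fun γ ↦ by rw [← norm_kroneckerSquare]; rfl)
  · refine .trans (.of_norm_le fun γ ↦ ?_) (husq.trans (.of_bound' (.of_forall fun γ ↦ ?_)))
    · rw [Real.norm_of_nonneg (Real.exp_pos _).le]
      gcongr
      exact le_add_of_nonneg_right hb
    · rw [norm_pow, norm_norm, ← norm_kroneckerSquare]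
      exact norm_le_norm_directSum (kroneckerSquare.comp u) r γ

end VisibleCoefficient

section ConjugateRepresentations

open Asymptotics Filter

variable {Γ ι κ : Type*} [Fintype ι] [DecidableEq ι] [Fintype κ] [DecidableEq κ]

theorem mul_mul_isBigO (P Q : Matrix ι ι ℝ) (R : Γ → Matrix ι ι ℝ) :
    (fun γ ↦ P * R γ * Q) =O[⊤] R := by
  refine .of_bound (‖P‖ * ‖Q‖) <| .of_forall fun γ ↦ ?_
  calc ‖P * R γ * Q‖ ≤ ‖P‖ * ‖R γ‖ * ‖Q‖ := norm_mul₃_le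
    _ = ‖P‖ * ‖Q‖ * ‖R γ‖ := by ring

variable [Monoid Γ]

/-- The representation `γ ↦ Q * R γ * Q⁻¹`. -/
def conj (Q : (Matrix ι ι ℝ)ˣ) (R : Γ →* Matrix ι ι ℝ) : Γ →* Matrix ι ι ℝ :=
  (MulDistribMulAction.toMonoidHom _ (ConjAct.toConjAct Q)).comp R

theorem conj_apply (Q : (Matrix ι ι ℝ)ˣ) (R : Γ →* Matrix ι ι ℝ) (γ : Γ) :
    conj Q R γ = Q.val * R γ * Q⁻¹.val :=
  ConjAct.units_smul_def _ _

theorem conj_inv_conj (Q : (Matrix ι ι ℝ)ˣ) (R : Γ →* Matrix ι ι ℝ) :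
    conj Q⁻¹ (conj Q R) = R := by
  ext1 γ
  simp only [conj_apply, inv_inv, mul_assoc, Units.inv_mul_cancel_left, Units.inv_mul, mul_one]

theorem conj_isBigO (Q : (Matrix ι ι ℝ)ˣ) (R : Γ →* Matrix ι ι ℝ) : conj Q R =O[⊤] R :=
  (mul_mul_isBigO Q.val Q⁻¹.val R).congr_left fun γ ↦ (conj_apply Q R γ).symm

theorem HasExpGap.conj {ℓ : Γ → ℕ} {a : ℝ} {R : Γ →* Matrix ι ι ℝ} (hR : HasExpGap ℓ a R)
    (Q : (Matrix ι ι ℝ)ˣ) : HasExpGap ℓ a (conj Q R) := by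
  have hR' : R =O[⊤] FreeProductAnosov.conj Q R := by
    simpa only [conj_inv_conj] using conj_isBigO Q⁻¹ (FreeProductAnosov.conj Q R)
  have hΛ : (fun γ ↦ exteriorSquare (FreeProductAnosov.conj Q R γ)) =O[⊤]
      fun γ ↦ exteriorSquare (R γ) :=
    (mul_mul_isBigO (exteriorSquare Q.val) (exteriorSquare Q⁻¹.val)
      fun γ ↦ exteriorSquare (R γ)).congr_left fun γ ↦ by
        rw [conj_apply, exteriorSquare_mul, exteriorSquare_mul]
  exact (hΛ.trans hR).trans ((isBigO_refl _ _).mul (hR'.norm_norm.pow 2))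

/-- The conjugating matrix is `[1, U; -V, 1]`, where `U = v ⊗ e_q` and `V = e_p ⊗ f`. -/
theorem exists_conj_directSum_one_apply (R : Γ →* Matrix ι ι ℝ) (f v : ι → ℝ) {p q : κ}
    (hpq : p ≠ q) :
    ∃ Q, ∀ γ, conj Q (directSum R (1 : Γ →* Matrix κ κ ℝ)) γ (.inr p) (.inr q) =
      f ⬝ᵥ R γ *ᵥ v - f ⬝ᵥ v := by
  let U : Matrix ι κ ℝ := vecMulVec v (Pi.single q 1)
  let V : Matrix κ ι ℝ := vecMulVec (Pi.single p 1) f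
  have hUV : U * V = 0 := by simp [U, V, vecMulVec_mul_vecMulVec, hpq.symm]
  have hVU (A : Matrix ι ι ℝ) : (V * A * U) p q = f ⬝ᵥ A *ᵥ v := by
    simp [U, V, vecMulVec_mul, mul_vecMulVec, vecMulVec_mulVec, vecMulVec_apply, dotProduct_mulVec]
  let Q : (Matrix (ι ⊕ κ) (ι ⊕ κ) ℝ)ˣ :=
    { val := fromBlocks 1 U (-V) 1
      inv := fromBlocks 1 (-U) V (1 - V * U)
      val_inv := by simp [fromBlocks_multiply, Matrix.mul_sub, ← Matrix.mul_assoc, hUV]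
      inv_val := by simp [fromBlocks_multiply, Matrix.sub_mul, Matrix.mul_assoc, hUV] }
  refine ⟨Q, fun γ ↦ ?_⟩
  have hblock : conj Q (directSum R (1 : Γ →* Matrix κ κ ℝ)) γ =
      fromBlocks 1 U (-V) 1 * fromBlocks (R γ) 0 0 1 * fromBlocks 1 (-U) V (1 - V * U) :=
    conj_apply _ _ _
  calc conj Q (directSum R (1 : Γ →* Matrix κ κ ℝ)) γ (.inr p) (.inr q)
      = (V * R γ * U) p q + ((1 : Matrix κ κ ℝ) p q - (V * (1 : Matrix ι ι ℝ) * U) p q) := by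
        rw [hblock]
        simp [fromBlocks_multiply]
    _ = f ⬝ᵥ R γ *ᵥ v - f ⬝ᵥ v := by
        rw [one_apply_ne hpq, hVU, hVU, one_mulVec, zero_sub, sub_eq_add_neg]

end ConjugateRepresentations

section PeakedMatrices

variable {ι : Type*}

/-- Up to a relative error `ε`, the matrix `A` is a multiple of the elementary matrix at `(p, q)`,
and its second exterior power is smaller than that of a generic matrix by a factor `ε * δ`. -/
structure IsPeaked [Fintype ι] (ε δ : ℝ) (p q : ι) (A : Matrix ι ι ℝ) : Prop where
  abs_apply_le : ∀ i j, (i, j) ≠ (p, q) → |A i j| ≤ ε * |A p q|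
  norm_exteriorSquare_le : ‖exteriorSquare A‖ ≤ ε * δ * A p q ^ 2

theorem IsPeaked.submatrix_equiv {κ : Type*} [Fintype ι] [Fintype κ] {ε δ : ℝ} {p q : κ}
    {A : Matrix ι ι ℝ} {e : κ ≃ ι} (hA : IsPeaked ε δ (e p) (e q) A) :
    IsPeaked ε δ p q (A.submatrix e e) := by
  refine ⟨fun i j hij ↦ ?_, ?_⟩
  · exact hA.abs_apply_le (e i) (e j) (by simpa using hij)
  · rw [norm_exteriorSquare_submatrix_equiv]
    exact hA.norm_exteriorSquare_le

variable [DecidableEq ι] {p q : ι} {t : ℝ}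

/-- The function with value `t` at `p`, `t⁻¹` at `q` and `1` elsewhere. -/
noncomputable def stretch (p q : ι) (t : ℝ) (i : ι) : ℝ :=
  if i = p then t else if i = q then t⁻¹ else 1

theorem stretch_pos (ht : 0 < t) (i : ι) : 0 < stretch p q t i := by
  unfold stretch
  split_ifs <;> positivity

theorem stretch_le_one (ht : 1 ≤ t) {i : ι} (hi : i ≠ p) : stretch p q t i ≤ 1 := by
  unfold stretch
  rw [if_neg hi]
  split_ifs
  · exact inv_le_one_of_one_le₀ ht
  · rfl

theorem stretch_le (ht : 1 ≤ t) (i : ι) : stretch p q t i ≤ t := by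
  by_cases hi : i = p
  · exact (if_pos hi).le
  · exact (stretch_le_one ht hi).trans ht

theorem stretch_mul_stretch_swap (hpq : p ≠ q) (ht : t ≠ 0) (i : ι) :
    stretch p q t i * stretch q p t i = 1 := by
  unfold stretch
  split_ifs with hip hiq <;> simp_all

theorem stretch_mul_stretch_le (ht : 1 ≤ t) {p' q' i j : ι} (h : i ≠ p ∨ j ≠ p') :
    stretch p q t i * stretch p' q' t j ≤ t := by
  have hpos := zero_lt_one.trans_le ht
  rcases h with hi | hj
  · exact (mul_le_of_le_one_left (stretch_pos hpos j).le (stretch_le_one ht hi)).trans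
      (stretch_le ht j)
  · exact (mul_le_of_le_one_right (stretch_pos hpos i).le (stretch_le_one ht hj)).trans
      (stretch_le ht i)

variable [Fintype ι]

theorem norm_exteriorSquare_diagonal_stretch_le (ht : 1 ≤ t) :
    ‖exteriorSquare (diagonal (stretch p q t))‖ ≤ Fintype.card ι * t := by
  have hpos := zero_lt_one.trans_le ht
  refine norm_exteriorSquare_diagonal_le hpos.le fun i j hij ↦ ?_
  rw [abs_of_pos (mul_pos (stretch_pos hpos i) (stretch_pos hpos j))]
  exact stretch_mul_stretch_le ht (not_and_or.mp fun h ↦ hij (h.1.trans h.2.symm))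

/-- The diagonal matrix with entries `stretch p q t`. Conjugating by it multiplies the entry at
`(p, q)` by `t ^ 2` and every other entry by at most `t`. -/
noncomputable def stretchUnit (hpq : p ≠ q) (ht : t ≠ 0) : (Matrix ι ι ℝ)ˣ where
  val := diagonal (stretch p q t)
  inv := diagonal (stretch q p t)
  val_inv := by simp only [diagonal_mul_diagonal, stretch_mul_stretch_swap hpq ht, diagonal_one]
  inv_val := by
    simp only [diagonal_mul_diagonal, stretch_mul_stretch_swap hpq.symm ht, diagonal_one]

theorem isPeaked_diagonal_stretch_mul_mul (ht : 1 ≤ t) {A : Matrix ι ι ℝ}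
    {C K ε δ : ℝ} (hK : 0 ≤ K) (hδ : 0 ≤ δ) (hA : ‖A‖ ≤ C * |A p q|)
    (hΛ : ‖exteriorSquare A‖ ≤ K * δ * ‖A‖ ^ 2) (htC : C ≤ ε * t)
    (htK : (Fintype.card ι) ^ 2 * K * C ^ 2 ≤ ε * t ^ 2) :
    IsPeaked ε δ p q (diagonal (stretch p q t) * A * diagonal (stretch q p t)) := by
  have hpos := zero_lt_one.trans_le ht
  set A' := diagonal (stretch p q t) * A * diagonal (stretch q p t) with hA'
  have hentry (i j) : A' i j = stretch p q t i * stretch q p t j * A i j := by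
    rw [hA', mul_diagonal, diagonal_mul]
    ring
  have hpeak : A' p q = t ^ 2 * A p q := by
    rw [hentry]
    simp [stretch, pow_two]
  refine ⟨fun i j hij ↦ ?_, ?_⟩
  · have hij' : i ≠ p ∨ j ≠ q := not_and_or.mp fun h ↦ hij (Prod.ext h.1 h.2)
    calc |A' i j| = stretch p q t i * stretch q p t j * |A i j| := by
          rw [hentry, abs_mul, abs_of_pos (mul_pos (stretch_pos hpos i) (stretch_pos hpos j))]
      _ ≤ t * (C * |A p q|) := by
          gcongr
          · exact stretch_mul_stretch_le ht hij'
          · exact (abs_entry_le_frobenius_norm A i j).trans hA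
      _ ≤ t * (ε * t * |A p q|) := by gcongr
      _ = ε * |A' p q| := by
          rw [hpeak, abs_mul, abs_of_pos (pow_pos hpos 2)]
          ring
  · calc ‖exteriorSquare A'‖
        ≤ ‖exteriorSquare (diagonal (stretch p q t))‖ * ‖exteriorSquare A‖ *
            ‖exteriorSquare (diagonal (stretch q p t))‖ :=
          (norm_exteriorSquare_mul_le _ _).trans <| by
            gcongr
            exact norm_exteriorSquare_mul_le _ _
      _ ≤ (Fintype.card ι * t) * (K * δ * (C * |A p q|) ^ 2) * (Fintype.card ι * t) := by
          gcongr
          · exact norm_exteriorSquare_diagonal_stretch_le ht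
          · exact hΛ.trans (by gcongr)
          · exact norm_exteriorSquare_diagonal_stretch_le ht
      _ = Fintype.card ι ^ 2 * K * C ^ 2 * (δ * t ^ 2 * A p q ^ 2) := by
          rw [mul_pow, sq_abs]
          ring
      _ ≤ ε * t ^ 2 * (δ * t ^ 2 * A p q ^ 2) := by gcongr
      _ = ε * δ * A' p q ^ 2 := by
          rw [hpeak]
          ring

end PeakedMatrices

section PeakedRepresentations

open Asymptotics Filter

variable {Γ ι κ : Type*} [Group Γ] [Fintype ι] [DecidableEq ι] {ℓ : Γ → ℕ} {a : ℝ}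

theorem exists_isPeaked_of_norm_le {M : Γ →* Matrix ι ι ℝ} (hM : HasExpGap ℓ a M) {p q : ι}
    (hpq : p ≠ q) {C : ℝ} (hC : ∀ γ ≠ 1, ‖M γ‖ ≤ C * |M γ p q|) {ε : ℝ} (hε : 0 < ε) :
    ∃ M' : Γ →* Matrix ι ι ℝ, ∀ γ ≠ 1, IsPeaked ε (Real.exp (-a * ℓ γ)) p q (M' γ) := by
  obtain ⟨K, hK, hbound⟩ := hM.exists_nonneg
  have hεt : Tendsto (fun t : ℝ ↦ ε * t) atTop atTop := tendsto_id.const_mul_atTop hε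
  have hεt' : Tendsto (fun t : ℝ ↦ ε * t ^ 2) atTop atTop :=
    (tendsto_pow_atTop two_ne_zero).const_mul_atTop hε
  obtain ⟨t, ht, htC, htK⟩ := ((eventually_ge_atTop 1).and
    ((hεt.eventually_ge_atTop C).and
      (hεt'.eventually_ge_atTop (Fintype.card ι ^ 2 * K * C ^ 2)))).exists
  refine ⟨conj (stretchUnit hpq (zero_lt_one.trans_le ht).ne') M, fun γ hγ ↦ ?_⟩
  rw [conj_apply]
  refine isPeaked_diagonal_stretch_mul_mul ht hK (Real.exp_pos _).le (hC γ hγ) ?_ htC htK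
  simpa [mul_assoc] using (isBigOWith_top.mp hbound) γ

variable {R : Γ →* Matrix ι ι ℝ}

theorem exists_hasExpGap_norm_le_apply [Fintype κ] [DecidableEq κ] (hR : HasExpGap ℓ a R)
    (ha : 0 ≤ a) (hgrowth : (fun γ ↦ Real.exp (a * ℓ γ)) =O[⊤] R) {f v : ι → ℝ}
    (hfv : HasVisibleCoefficient R f v) {p q : κ} (hpq : p ≠ q) :
    ∃ M : Γ →* Matrix (ι ⊕ κ) (ι ⊕ κ) ℝ, HasExpGap ℓ a M ∧
      ∃ C, ∀ γ ≠ 1, ‖M γ‖ ≤ C * |M γ (.inr p) (.inr q)| := by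
  obtain ⟨Q, hQ⟩ := exists_conj_directSum_one_apply R f v hpq
  have hone : (fun γ ↦ (1 : Γ →* Matrix κ κ ℝ) γ) =O[⊤] fun γ ↦ Real.exp (-a * ℓ γ) * ‖R γ‖ := by
    refine .trans (isBigO_const_const (1 : Matrix κ κ ℝ) (one_ne_zero (α := ℝ)) ⊤) ?_
    refine ((isBigO_refl (fun γ ↦ Real.exp (-a * ℓ γ)) ⊤).mul hgrowth.norm_right).congr_left
      fun γ ↦ ?_
    rw [← Real.exp_add, neg_mul, neg_add_cancel, Real.exp_zero]
  have hgap := (hR.directSum ha hone).conj Q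
  have hRM : conj Q (directSum R (1 : Γ →* Matrix κ κ ℝ)) =O[⊤] R :=
    (conj_isBigO Q _).trans (directSum_isBigO ha hone)
  obtain ⟨c, hc, hcR⟩ := hRM.exists_nonneg
  obtain ⟨C, -, hC⟩ := hfv
  refine ⟨_, hgap, c * C, fun γ hγ ↦ ?_⟩
  calc _ ≤ c * ‖R γ‖ := isBigOWith_top.mp hcR γ
    _ ≤ c * (C * |f ⬝ᵥ R γ *ᵥ v - f ⬝ᵥ v|) := by
        gcongr
        exact hC γ hγ
    _ = _ := by rw [hQ, mul_assoc]

theorem exists_isPeaked (hR : HasExpGap ℓ a R) (ha : 0 ≤ a)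
    (hgrowth : (fun γ ↦ Real.exp (a * ℓ γ)) =O[⊤] R) {f v : ι → ℝ}
    (hfv : HasVisibleCoefficient R f v) {I : Type*} [Fintype I] [DecidableEq I] (g : ι ↪ I)
    {p q : I} (hp : p ∉ Set.range g) (hq : q ∉ Set.range g) (hpq : p ≠ q) {ε : ℝ} (hε : 0 < ε) :
    ∃ M : Γ →* Matrix I I ℝ, ∀ γ ≠ 1, IsPeaked ε (Real.exp (-a * ℓ γ)) p q (M γ) := by
  classical
  let p' : ↥(Set.range g)ᶜ := ⟨p, hp⟩
  let q' : ↥(Set.range g)ᶜ := ⟨q, hq⟩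
  have hpq' : p' ≠ q' := fun h ↦ hpq (congrArg Subtype.val h)
  let e : ι ⊕ ↥(Set.range g)ᶜ ≃ I :=
    ((Equiv.ofInjective g g.injective).sumCongr (.refl _)).trans (Equiv.Set.sumCompl _)
  obtain ⟨M, hM, C, hC⟩ := exists_hasExpGap_norm_le_apply hR ha hgrowth hfv hpq'
  obtain ⟨M', hM'⟩ := exists_isPeaked_of_norm_le hM (Sum.inr_injective.ne hpq') hC hε
  refine ⟨(reindexAlgEquiv ℝ ℝ e : Matrix _ _ ℝ →* Matrix _ _ ℝ).comp M', fun γ hγ ↦ ?_⟩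
  refine IsPeaked.submatrix_equiv (e := e.symm) ?_
  rw [show e.symm p = .inr p' from e.symm_apply_apply (.inr p'),
    show e.symm q = .inr q' from e.symm_apply_apply (.inr q')]
  exact hM' γ hγ

end PeakedRepresentations

section AlternatingProducts

variable {G : Type*} [Group G] {H : Bool → Subgroup G} {b c : Bool} {g w : G}

/-- The element is a product of nontrivial elements taken alternately from `H false` and `H true`,
the first of them from `H b`. -/
inductive IsAlternating (H : Bool → Subgroup G) : Bool → G → Prop
  | of_mem {b : Bool} {g : G} : g ∈ H b → g ≠ 1 → IsAlternating H b g
  | mul {b : Bool} {g w : G} :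
      g ∈ H b → g ≠ 1 → IsAlternating H (!b) w → IsAlternating H b (g * w)

theorem IsAlternating.mul_eq_one_or (hw : IsAlternating H c w) (hg : g ∈ H b) :
    g * w = 1 ∨ ∃ b', IsAlternating H b' (g * w) := by
  by_cases hg1 : g = 1
  · exact .inr ⟨c, by rwa [hg1, one_mul]⟩
  obtain hc | rfl : c = !b ∨ c = b := by cases b <;> cases c <;> simp
  · exact .inr ⟨b, .mul hg hg1 (hc ▸ hw)⟩
  cases hw with
  | of_mem hw _ =>
    by_cases hgw : g * w = 1
    · exact .inl hgw
    · exact .inr ⟨c, .of_mem (mul_mem hg hw) hgw⟩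
  | @mul _ h w' hh _ hw' =>
    rw [← mul_assoc]
    by_cases hgh : g * h = 1
    · exact .inr ⟨!c, by rwa [hgh, one_mul]⟩
    · exact .inr ⟨c, .mul (mul_mem hg hh) hgh hw'⟩

theorem exists_isAlternating_of_mem_iSup (hw : w ∈ ⨆ b, H b) (hw1 : w ≠ 1) :
    ∃ b, IsAlternating H b w := by
  suffices w = 1 ∨ ∃ b, IsAlternating H b w from this.resolve_left hw1
  clear hw1
  rw [Subgroup.iSup_eq_closure] at hw
  have hmul {x y : G} (hx : x ∈ ⋃ b, (H b : Set G))
      (hy : y = 1 ∨ ∃ b, IsAlternating H b y) :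
      x * y = 1 ∨ ∃ b, IsAlternating H b (x * y) := by
    obtain ⟨b, hxb⟩ := Set.mem_iUnion.mp hx
    rcases hy with rfl | ⟨c, hy⟩
    · rw [mul_one]
      exact or_iff_not_imp_left.mpr fun hx1 ↦ ⟨b, .of_mem hxb hx1⟩
    · exact hy.mul_eq_one_or hxb
  induction hw using Subgroup.closure_induction_left with
  | one => exact .inl rfl
  | mul_left x hx y _ ih => exact hmul hx ih
  | inv_mul_cancel x hx y _ ih => exact hmul (by simpa using hx) ih

end AlternatingProducts

section PingPong

variable {ι : Type*} [Fintype ι] {ε δ δ' : ℝ} {p q : ι} {A B : Matrix ι ι ℝ}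

/-- Some column of `B` takes its largest absolute value in row `p`, and `exteriorSquare B` is
smaller than the square of that entry by a factor `δ / 8`. -/
def HasPeakedColumn (δ : ℝ) (p : ι) (B : Matrix ι ι ℝ) : Prop :=
  ∃ j, (∀ i, |B i j| ≤ |B p j|) ∧ ‖exteriorSquare B‖ ≤ δ / 8 * B p j ^ 2

theorem IsPeaked.hasPeakedColumn (hA : IsPeaked ε δ p q A) (hε : ε ≤ 1 / 8) (hδ : 0 ≤ δ) :
    HasPeakedColumn δ p A := by
  refine ⟨q, fun i ↦ ?_, hA.norm_exteriorSquare_le.trans ?_⟩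
  · by_cases hi : i = p
    · rw [hi]
    · refine (hA.abs_apply_le i q (by simp [hi])).trans ?_
      exact mul_le_of_le_one_left (abs_nonneg _) (by linarith)
  · rw [div_eq_mul_one_div, mul_comm δ]
    gcongr

theorem IsPeaked.abs_sum_mul_le (hA : IsPeaked ε δ p q A) (hε : 0 ≤ ε) {x : ι → ℝ}
    (hx : ∀ k, |x k| ≤ |x q|) {i : ι} {s : Finset ι} (hs : ∀ k ∈ s, (i, k) ≠ (p, q)) :
    |∑ k ∈ s, A i k * x k| ≤ Fintype.card ι * ε * |A p q * x q| := by
  calc |∑ k ∈ s, A i k * x k| ≤ ∑ k ∈ s, |A i k * x k| := Finset.abs_sum_le_sum_abs _ _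
    _ ≤ ∑ _ ∈ s, ε * |A p q * x q| := Finset.sum_le_sum fun k hk ↦ by
        rw [abs_mul, abs_mul, ← mul_assoc]
        exact mul_le_mul (hA.abs_apply_le i k (hs k hk)) (hx k) (abs_nonneg _) (by positivity)
    _ ≤ Fintype.card ι * ε * |A p q * x q| := by
        rw [Finset.sum_const, nsmul_eq_mul, mul_assoc]
        gcongr
        exact Finset.card_le_univ s

theorem IsPeaked.mul_hasPeakedColumn (hA : IsPeaked ε δ p q A)
    (hB : HasPeakedColumn δ' q B) (hε : 0 ≤ ε) (hε' : ε ≤ 1 / 8)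
    (hcard : Fintype.card ι * ε ≤ 1 / 2) (hδ : 0 ≤ δ) (hδ' : 0 ≤ δ') :
    HasPeakedColumn (δ * δ') p (A * B) := by
  classical
  obtain ⟨j, hj, hΛ⟩ := hB
  have hsum (i : ι) (s : Finset ι) (hs : ∀ k ∈ s, (i, k) ≠ (p, q)) :
      |∑ k ∈ s, A i k * B k j| ≤ 1 / 2 * |A p q * B q j| :=
    (hA.abs_sum_mul_le hε hj hs).trans (by gcongr)
  have hpeak : 1 / 2 * |A p q * B q j| ≤ |(A * B) p j| := by
    have htail := hsum p (Finset.univ.erase q) (by simp +contextual)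
    rw [mul_apply, ← Finset.add_sum_erase _ _ (Finset.mem_univ q)]
    have := abs_sub_abs_le_abs_add (A p q * B q j) (∑ k ∈ Finset.univ.erase q, A p k * B k j)
    linarith
  refine ⟨j, fun i ↦ ?_, ?_⟩
  · by_cases hi : i = p
    · rw [hi]
    · exact (hsum i Finset.univ (by simp [hi])).trans hpeak
  · have hsq : (A p q * B q j) ^ 2 ≤ 4 * (A * B) p j ^ 2 := by
      rw [← sq_abs, ← sq_abs ((A * B) p j)]
      nlinarith [abs_nonneg (A p q * B q j)]
    calc ‖exteriorSquare (A * B)‖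
        ≤ ‖exteriorSquare A‖ * ‖exteriorSquare B‖ := norm_exteriorSquare_mul_le A B
      _ ≤ (ε * δ * A p q ^ 2) * (δ' / 8 * B q j ^ 2) := by
          gcongr
          exact hA.norm_exteriorSquare_le
      _ = ε * (δ * δ' / 8) * (A p q * B q j) ^ 2 := by ring
      _ ≤ 1 / 8 * (δ * δ' / 8) * (4 * (A * B) p j ^ 2) := by gcongr
      _ ≤ δ * δ' / 8 * (A * B) p j ^ 2 := by
          nlinarith [mul_nonneg (mul_nonneg hδ hδ') (sq_nonneg ((A * B) p j))]

variable {M : Type*} [Group M] {H : Bool → Subgroup M} {P : Bool → ι} [DecidableEq ι]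
  {ρ : M →* Matrix ι ι ℝ} {ℓ : M → ℕ} {a : ℝ}

theorem IsAlternating.hasPeakedColumn {b : Bool} {w : M} (hw : IsAlternating H b w)
    (hρ : ∀ b, ∀ g ∈ H b, g ≠ 1 → IsPeaked ε (Real.exp (-a * ℓ g)) (P b) (P !b) (ρ g))
    (hε : 0 ≤ ε) (hε' : ε ≤ 1 / 8) (hcard : Fintype.card ι * ε ≤ 1 / 2) (ha : 0 ≤ a)
    (hℓ : ∀ g h, ℓ (g * h) ≤ ℓ g + ℓ h) : HasPeakedColumn (Real.exp (-a * ℓ w)) (P b) (ρ w) := by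
  induction hw with
  | of_mem hg hg1 => exact (hρ _ _ hg hg1).hasPeakedColumn hε' (Real.exp_pos _).le
  | @mul b g w hg hg1 _ ih =>
    obtain ⟨j, hj, hΛ⟩ := (hρ b g hg hg1).mul_hasPeakedColumn ih hε hε' hcard
      (Real.exp_pos _).le (Real.exp_pos _).le
    refine ⟨j, by rwa [map_mul], ?_⟩
    rw [map_mul]
    have hle : (ℓ (g * w) : ℝ) ≤ ℓ g + ℓ w := mod_cast hℓ g w
    refine hΛ.trans ?_
    rw [← Real.exp_add]
    gcongr
    nlinarith

theorem norm_exteriorSquare_le_of_isPeaked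
    (hρ : ∀ b, ∀ g ∈ H b, g ≠ 1 → IsPeaked ε (Real.exp (-a * ℓ g)) (P b) (P !b) (ρ g))
    (hε : 0 ≤ ε) (hε' : ε ≤ 1 / 8) (hcard : Fintype.card ι * ε ≤ 1 / 2) (ha : 0 ≤ a)
    (hℓ : ∀ g h, ℓ (g * h) ≤ ℓ g + ℓ h) {w : M} (hw : w ∈ ⨆ b, H b) (hw1 : w ≠ 1) :
    ‖exteriorSquare (ρ w)‖ ≤ Real.exp (-a * ℓ w) / 8 * ‖ρ w‖ ^ 2 := by
  obtain ⟨b, hb⟩ := exists_isAlternating_of_mem_iSup hw hw1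
  obtain ⟨j, -, hΛ⟩ := hb.hasPeakedColumn hρ hε hε' hcard ha hℓ
  refine hΛ.trans ?_
  rw [← sq_abs]
  gcongr
  exact abs_entry_le_frobenius_norm _ _ _

end PingPong

section SpecialLinearGroup

variable {M ι : Type*} [Fintype ι] [DecidableEq ι]

theorem exists_specialLinearGroup_hom [Monoid M] [Nonempty ι] (R : M →* Matrix ι ι ℝ)
    (hR : ∀ w, 0 < (R w).det) :
    ∃ ρ : M →* SpecialLinearGroup ι ℝ, ∀ w, ∃ c : ℝ, ρ w = c • R w := by
  let c (w : M) : ℝ := (R w).det⁻¹ ^ (Fintype.card ι : ℝ)⁻¹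
  have hc (w : M) : c w ^ Fintype.card ι = (R w).det⁻¹ :=
    Real.rpow_inv_natCast_pow (inv_nonneg.mpr (hR w).le) Fintype.card_ne_zero
  have hmul (w w' : M) : c (w * w') = c w * c w' := by
    simp only [c, map_mul, det_mul, mul_inv]
    exact Real.mul_rpow (inv_nonneg.mpr (hR w).le) (inv_nonneg.mpr (hR w').le)
  let ρ : M →* SpecialLinearGroup ι ℝ :=
    { toFun w := ⟨c w • R w, by rw [det_smul, hc, inv_mul_cancel₀ (hR w).ne']⟩
      map_one' := Subtype.ext <| by simp [c]
      map_mul' w w' := Subtype.ext <| by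
        change c (w * w') • R (w * w') = c w • R w * c w' • R w'
        rw [hmul, map_mul, smul_mul_smul_comm] }
  exact ⟨ρ, fun w ↦ ⟨c w, rfl⟩⟩

theorem det_kroneckerSquare_pos {A : Matrix ι ι ℝ} (hA : A.det ≠ 0) :
    0 < (kroneckerSquare A).det := by
  have hdet : (kroneckerSquare A).det = (A.det ^ Fintype.card ι) ^ 2 :=
    (det_kronecker A A).trans (pow_two _).symm
  rw [hdet]
  positivity

theorem norm_exteriorSquare_kroneckerSquare_le {A : Matrix ι ι ℝ} {η : ℝ}
    (hA : ‖exteriorSquare A‖ ≤ η * ‖A‖ ^ 2) :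
    ‖exteriorSquare (kroneckerSquare A)‖ ≤ 2 * η * ‖kroneckerSquare A‖ ^ 2 := by
  calc ‖exteriorSquare (kroneckerSquare A)‖
      ≤ 2 * ‖A‖ ^ 2 * ‖exteriorSquare A‖ := norm_exteriorSquare_kronecker_self_le A
    _ ≤ 2 * ‖A‖ ^ 2 * (η * ‖A‖ ^ 2) := by gcongr
    _ = 2 * η * ‖kroneckerSquare A‖ ^ 2 := by
        rw [norm_kroneckerSquare]
        ring

theorem norm_exteriorSquare_smul_le {A : Matrix ι ι ℝ} {η : ℝ}
    (hA : ‖exteriorSquare A‖ ≤ η * ‖A‖ ^ 2) (c : ℝ) :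
    ‖exteriorSquare (c • A)‖ ≤ η * ‖c • A‖ ^ 2 := by
  rw [exteriorSquare_smul, norm_smul, norm_smul, norm_pow, mul_pow, mul_left_comm]
  gcongr

/-- The determinants of the tensor square `ρ ⊗ ρ` are positive, so it can be rescaled to have values
in the special linear group. -/
theorem exists_specialLinearGroup_hom_of_norm_exteriorSquare_le [Group M] [Nonempty ι]
    {κ : Type*} [Fintype κ] [DecidableEq κ] (e : ι × ι ≃ κ) (ρ : M →* Matrix ι ι ℝ) {η : M → ℝ}
    (hρ : ∀ w ≠ 1, ‖exteriorSquare (ρ w)‖ ≤ η w * ‖ρ w‖ ^ 2) :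
    ∃ ρ' : M →* SpecialLinearGroup κ ℝ,
      ∀ w ≠ 1, ‖exteriorSquare (ρ' w : Matrix κ κ ℝ)‖ ≤ 2 * η w * ‖(ρ' w : Matrix κ κ ℝ)‖ ^ 2 := by
  have : Nonempty κ := e.symm.nonempty
  let R : M →* Matrix κ κ ℝ :=
    (reindexAlgEquiv ℝ ℝ e : Matrix (ι × ι) (ι × ι) ℝ →* Matrix κ κ ℝ).comp
      (kroneckerSquare.comp ρ)
  have hR (w : M) : R w = (kroneckerSquare (ρ w)).submatrix e.symm e.symm := rfl
  obtain ⟨ρ', hρ'⟩ := exists_specialLinearGroup_hom R fun w ↦ by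
    rw [hR, det_submatrix_equiv_self]
    exact det_kroneckerSquare_pos
      ((isUnit_iff_isUnit_det _).mp ((Group.isUnit w).map ρ)).ne_zero
  refine ⟨ρ', fun w hw ↦ ?_⟩
  obtain ⟨c, hc⟩ := hρ' w
  rw [hc]
  refine norm_exteriorSquare_smul_le ?_ c
  rw [hR, norm_exteriorSquare_submatrix_equiv, frobenius_norm_submatrix_equiv]
  exact norm_exteriorSquare_kroneckerSquare_le (hρ w hw)

theorem specialLinearGroup_hom_injective [Group M] [Nontrivial ι]
    {ρ : M →* SpecialLinearGroup ι ℝ}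
    (hρ : ∀ w ≠ 1, 2 * ‖exteriorSquare (ρ w : Matrix ι ι ℝ)‖ < ‖(ρ w : Matrix ι ι ℝ)‖ ^ 2) :
    Function.Injective ρ := by
  refine (injective_iff_map_eq_one ρ).mpr fun w hw ↦ ?_
  by_contra hw1
  have hlt := hρ w hw1
  rw [show (ρ w : Matrix ι ι ℝ) = 1 from congrArg Subtype.val hw] at hlt
  exact (norm_sq_one_le_norm_exteriorSquare_one (ι := ι)).not_gt hlt

end SpecialLinearGroup

section SingularValueGaps

variable {d : ℕ} {A : Matrix (Fin d) (Fin d) ℝ} {t : ℝ}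

theorem sub_le_log_sub_log_of_le_exp_neg_mul {x y c : ℝ} (hx : 0 < x) (hy : 0 < y) (hc : 0 < c)
    (h : y ≤ Real.exp (-t) * c * x) : t - Real.log c ≤ Real.log x - Real.log y := by
  have := Real.log_le_log hy h
  rw [Real.log_mul (by positivity) hx.ne', Real.log_mul (Real.exp_ne_zero _) hc.ne',
    Real.log_exp] at this
  linarith

theorem sub_log_le_log_sval_one_sub_log_sval_two (hA : A.det ≠ 0) (hd : 2 ≤ d)
    (h : ‖exteriorSquare A‖ ≤ Real.exp (-t) * ‖A‖ ^ 2) :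
    t - Real.log d ≤ Real.log (sval A 1) - Real.log (sval A 2) :=
  sub_le_log_sub_log_of_le_exp_neg_mul (sval_succ_pos hA ⟨0, by omega⟩)
    (sval_succ_pos hA ⟨1, by omega⟩) (by positivity) (sval_two_le hA hd (Real.exp_pos _).le h)

theorem sub_log_le_log_sval_pred_sub_log_sval_last (hA : A.det ≠ 0) (hd : 2 ≤ d)
    (h : ‖exteriorSquare A⁻¹‖ ≤ Real.exp (-t) * ‖A⁻¹‖ ^ 2) :
    t - Real.log d ≤ Real.log (sval A (d - 1)) - Real.log (sval A d) := by
  have hlast := sval_last_le hA hd (Real.exp_pos _).le h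
  obtain ⟨m, rfl⟩ := Nat.exists_eq_add_of_le' hd
  exact sub_le_log_sub_log_of_le_exp_neg_mul (sval_succ_pos hA ⟨m, by omega⟩)
    (sval_succ_pos hA ⟨m + 1, by omega⟩) (by positivity) hlast

variable {M ι : Type*} [Group M] {ℓ : M → ℕ} {a : ℝ}

theorem norm_exteriorSquare_le_exp_mul_of_ne_one [Fintype ι] [DecidableEq ι]
    {ρ : M →* SpecialLinearGroup ι ℝ} (hℓ : ℓ 1 = 0)
    (hρ : ∀ w ≠ 1, ‖exteriorSquare (ρ w : Matrix ι ι ℝ)‖ ≤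
      Real.exp (-(a * ℓ w)) * ‖(ρ w : Matrix ι ι ℝ)‖ ^ 2) (w : M) :
    ‖exteriorSquare (ρ w : Matrix ι ι ℝ)‖ ≤
      Real.exp (-(a * ℓ w)) * ‖(ρ w : Matrix ι ι ℝ)‖ ^ 2 := by
  by_cases hw : w = 1
  · simpa [hw, hℓ] using norm_exteriorSquare_le (ρ w : Matrix ι ι ℝ)
  · exact hρ w hw

theorem log_sval_gaps_of_norm_exteriorSquare_le (hd : 2 ≤ d)
    {ρ : M →* SpecialLinearGroup (Fin d) ℝ} (hℓ : ∀ w, ℓ w⁻¹ = ℓ w)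
    (hρ : ∀ w, ‖exteriorSquare (ρ w : Matrix (Fin d) (Fin d) ℝ)‖ ≤
      Real.exp (-(a * ℓ w)) * ‖(ρ w : Matrix (Fin d) (Fin d) ℝ)‖ ^ 2) (w : M) :
    a * ℓ w - Real.log d ≤ Real.log (sval (ρ w : Matrix (Fin d) (Fin d) ℝ) 1) -
        Real.log (sval (ρ w : Matrix (Fin d) (Fin d) ℝ) 2) ∧
      a * ℓ w - Real.log d ≤ Real.log (sval (ρ w : Matrix (Fin d) (Fin d) ℝ) (d - 1)) -
        Real.log (sval (ρ w : Matrix (Fin d) (Fin d) ℝ) d) := by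
  have hdet : (ρ w : Matrix (Fin d) (Fin d) ℝ).det ≠ 0 := by simp
  have hinv : (ρ w⁻¹ : Matrix (Fin d) (Fin d) ℝ) = (ρ w : Matrix (Fin d) (Fin d) ℝ)⁻¹ := by
    refine (inv_eq_left_inv (congrArg Subtype.val (?_ : ρ w⁻¹ * ρ w = 1))).symm
    rw [← map_mul, inv_mul_cancel, map_one]
  refine ⟨sub_log_le_log_sval_one_sub_log_sval_two hdet hd (hρ w),
    sub_log_le_log_sval_pred_sub_log_sval_last hdet hd ?_⟩
  simpa only [hinv, hℓ] using hρ w⁻¹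

theorem exists_injective_hom_log_sval_gaps [Fintype ι] [DecidableEq ι] [Nontrivial ι]
    (ρ : M →* Matrix ι ι ℝ) (ha : 0 ≤ a) (hone : ℓ 1 = 0) (hinv : ∀ w, ℓ w⁻¹ = ℓ w)
    (hρ : ∀ w ≠ 1, ‖exteriorSquare (ρ w)‖ ≤ Real.exp (-a * ℓ w) / 8 * ‖ρ w‖ ^ 2) :
    ∃ (d : ℕ) (ρ' : M →* SpecialLinearGroup (Fin d) ℝ), Function.Injective ρ' ∧
      ∃ C, 0 < C ∧ ∀ w,
        a * ℓ w - C ≤ Real.log (sval (ρ' w : Matrix (Fin d) (Fin d) ℝ) 1) -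
            Real.log (sval (ρ' w : Matrix (Fin d) (Fin d) ℝ) 2) ∧
          a * ℓ w - C ≤ Real.log (sval (ρ' w : Matrix (Fin d) (Fin d) ℝ) (d - 1)) -
            Real.log (sval (ρ' w : Matrix (Fin d) (Fin d) ℝ) d) := by
  have hd : 1 < Fintype.card (ι × ι) := Fintype.one_lt_card
  have : Nontrivial (Fin (Fintype.card (ι × ι))) := Fin.nontrivial_iff_two_le.mpr hd
  obtain ⟨ρ', hρ'⟩ :=
    exists_specialLinearGroup_hom_of_norm_exteriorSquare_le (Fintype.equivFin (ι × ι)) ρ hρ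
  have hnorm (w : M) : 0 < ‖(ρ' w).val‖ ^ 2 := by
    refine pow_pos (norm_pos_iff.mpr fun h ↦ zero_ne_one (α := ℝ) ?_) 2
    rw [← (ρ' w).2, h, det_zero]
  have hexp (w : M) : Real.exp (-a * ℓ w) ≤ 1 := by
    rw [Real.exp_le_one_iff, neg_mul, neg_nonpos]
    positivity
  refine ⟨_, ρ', specialLinearGroup_hom_injective fun w hw ↦ ?_, Real.log _,
    Real.log_pos (mod_cast hd), log_sval_gaps_of_norm_exteriorSquare_le hd hinv
      (norm_exteriorSquare_le_exp_mul_of_ne_one hone fun w hw ↦ (hρ' w hw).trans ?_)⟩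
  · nlinarith [hρ' w hw, hnorm w, hexp w]
  · rw [← neg_mul]
    gcongr
    linarith [Real.exp_pos (-a * ℓ w)]

end SingularValueGaps

section WordLength

open Asymptotics Filter

variable {G H : Type*} [Group G] [Group H] {S : Set G} {g h : G}

theorem wordLength_prod_le {l : List G} (hl : ∀ g ∈ l, g ∈ S ∨ g⁻¹ ∈ S) :
    wordLength S l.prod ≤ l.length :=
  Nat.sInf_le ⟨l, rfl, hl, rfl⟩

theorem exists_list_length_eq_wordLength (hg : g ∈ Subgroup.closure S) :
    ∃ l : List G, l.length = wordLength S g ∧ (∀ x ∈ l, x ∈ S ∨ x⁻¹ ∈ S) ∧ l.prod = g := by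
  rw [← Subgroup.mem_toSubmonoid, Subgroup.closure_toSubmonoid] at hg
  obtain ⟨l, hl, rfl⟩ := Submonoid.exists_list_of_mem_closure hg
  exact Nat.sInf_mem (s := {n | ∃ w : List G, w.length = n ∧ (∀ x ∈ w, x ∈ S ∨ x⁻¹ ∈ S) ∧
    w.prod = l.prod}) ⟨l.length, l, rfl, hl, rfl⟩

theorem wordLength_one (S : Set G) : wordLength S 1 = 0 :=
  Nat.le_zero.mp <| wordLength_prod_le (l := []) (by simp)

theorem wordLength_mul_le (hg : g ∈ Subgroup.closure S) (hh : h ∈ Subgroup.closure S) :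
    wordLength S (g * h) ≤ wordLength S g + wordLength S h := by
  obtain ⟨l, hl, hlS, rfl⟩ := exists_list_length_eq_wordLength hg
  obtain ⟨m, hm, hmS, rfl⟩ := exists_list_length_eq_wordLength hh
  rw [← hl, ← hm, ← List.prod_append, ← List.length_append]
  exact wordLength_prod_le fun x hx ↦ (List.mem_append.mp hx).elim (hlS x) (hmS x)

theorem wordLength_inv_le (hg : g ∈ Subgroup.closure S) : wordLength S g⁻¹ ≤ wordLength S g := by
  obtain ⟨l, hl, hlS, rfl⟩ := exists_list_length_eq_wordLength hg
  rw [← hl, List.prod_inv_reverse, ← List.length_map (·⁻¹), ← List.length_reverse]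
  refine wordLength_prod_le fun x hx ↦ (hlS x⁻¹ (by simpa using hx)).symm.imp_left ?_
  rw [inv_inv]
  exact id

theorem wordLength_inv (hg : g ∈ Subgroup.closure S) : wordLength S g⁻¹ = wordLength S g :=
  (wordLength_inv_le hg).antisymm <| by simpa using wordLength_inv_le (inv_mem hg)

theorem wordLength_map_le (φ : G →* H) {T : Set H} (hφ : Set.MapsTo φ S T)
    (hg : g ∈ Subgroup.closure S) : wordLength T (φ g) ≤ wordLength S g := by
  obtain ⟨l, hl, hlS, rfl⟩ := exists_list_length_eq_wordLength hg
  rw [← hl, map_list_prod, ← List.length_map φ]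
  refine wordLength_prod_le fun x hx ↦ ?_
  obtain ⟨y, hy, rfl⟩ := List.mem_map.mp hx
  rw [← map_inv]
  exact (hlS y hy).imp (hφ ·) (hφ ·)

theorem wordLength_preimage_val_le (g : Subgroup.closure S) :
    wordLength (Subtype.val ⁻¹' S) g ≤ wordLength S g.val := by
  obtain ⟨l, hl, hlS, hlg⟩ := exists_list_length_eq_wordLength g.2
  lift l to List (Subgroup.closure S) using fun x hx ↦ (hlS x hx).elim
    (Subgroup.subset_closure ·) fun hx' ↦ inv_mem_iff.mp (Subgroup.subset_closure hx')
  obtain rfl : l.prod = g := Subtype.ext <| by simpa using hlg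
  rw [← hl, List.length_map]
  exact wordLength_prod_le fun x hx ↦ hlS x (List.mem_map_of_mem hx)

theorem tendsto_wordLength_cofinite (hS : S.Finite) (hcl : Subgroup.closure S = ⊤) :
    Tendsto (wordLength S) cofinite atTop := by
  rw [← Nat.cofinite_eq_atTop]
  refine .cofinite_of_finite_preimage_singleton fun n ↦ ?_
  have : Finite ↥(S ∪ S⁻¹) := hS.union hS.inv
  refine ((List.finite_length_eq ↥(S ∪ S⁻¹) n).image fun l ↦ (l.map Subtype.val).prod).subset ?_
  intro g hg
  obtain ⟨l, hl, hlS, rfl⟩ := exists_list_length_eq_wordLength (g := g) (S := S) (by simp [hcl])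
  lift l to List ↥(S ∪ S⁻¹) using hlS
  rw [List.length_map] at hl
  exact ⟨l, hl.trans hg, rfl⟩

theorem exists_isBigO_exp_wordLength (hS : S.Finite) (hcl : Subgroup.closure S = ⊤)
    {A : Type*} [SeminormedRing A] (r : G →* A) :
    ∃ b, 0 ≤ b ∧ r =O[⊤] fun g ↦ Real.exp (b * wordLength S g) := by
  obtain ⟨D, hD⟩ := ((hS.union hS.inv).image fun g ↦ ‖r g‖).bddAbove
  have hD' {x : G} (hx : x ∈ S ∨ x⁻¹ ∈ S) : ‖r x‖ ≤ max D 1 :=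
    (hD ⟨x, hx, rfl⟩).trans (le_max_left _ _)
  have hpos : 0 < max D 1 := by positivity
  have hprod {l : List G} (hl : ∀ x ∈ l, x ∈ S ∨ x⁻¹ ∈ S) :
      ‖r l.prod‖ ≤ ‖(1 : A)‖ * max D 1 ^ l.length := by
    induction l with
    | nil => simp
    | cons x l ih =>
      rw [List.forall_mem_cons] at hl
      calc ‖r (x :: l).prod‖ ≤ ‖r x‖ * ‖r l.prod‖ := by
            rw [List.prod_cons, map_mul]
            exact norm_mul_le _ _
        _ ≤ max D 1 * (‖(1 : A)‖ * max D 1 ^ l.length) := by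
            gcongr
            exacts [hD' hl.1, ih hl.2]
        _ = ‖(1 : A)‖ * max D 1 ^ (x :: l).length := by
            rw [List.length_cons, pow_succ]
            ring
  refine ⟨Real.log (max D 1), Real.log_nonneg (le_max_right _ _), .of_bound ‖(1 : A)‖ <|
    .of_forall fun g ↦ ?_⟩
  obtain ⟨l, hl, hlS, rfl⟩ := exists_list_length_eq_wordLength (g := g) (S := S) (by simp [hcl])
  rw [Real.norm_of_nonneg (Real.exp_pos _).le, mul_comm (Real.log _), Real.exp_nat_mul,
    Real.exp_log hpos, ← hl]
  exact hprod hlS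

end WordLength

section FreeProducts

open Filter Monoid

variable {Γ₁ Γ₂ : Type*} [Group Γ₁] [Group Γ₂] {S₁ : Set Γ₁} {S₂ : Set Γ₂} {a : ℝ}

theorem norm_exteriorSquare_lift_le {ι : Type*} [Fintype ι] [DecidableEq ι] {p q : ι} {ε : ℝ}
    {ℓ : Coprod Γ₁ Γ₂ → ℕ} {ρ₁ : Γ₁ →* Matrix ι ι ℝ} {ρ₂ : Γ₂ →* Matrix ι ι ℝ}
    (hρ₁ : ∀ γ ≠ 1, IsPeaked ε (Real.exp (-a * ℓ (.inl γ))) p q (ρ₁ γ))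
    (hρ₂ : ∀ γ ≠ 1, IsPeaked ε (Real.exp (-a * ℓ (.inr γ))) q p (ρ₂ γ))
    (hε : 0 ≤ ε) (hε' : ε ≤ 1 / 8) (hcard : Fintype.card ι * ε ≤ 1 / 2) (ha : 0 ≤ a)
    (hℓ : ∀ g h, ℓ (g * h) ≤ ℓ g + ℓ h) {w : Coprod Γ₁ Γ₂} (hw : w ≠ 1) :
    ‖exteriorSquare (Coprod.lift ρ₁ ρ₂ w)‖ ≤
      Real.exp (-a * ℓ w) / 8 * ‖Coprod.lift ρ₁ ρ₂ w‖ ^ 2 := by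
  let H (b : Bool) : Subgroup (Coprod Γ₁ Γ₂) := cond b Coprod.inl.range Coprod.inr.range
  have hH : ⨆ b, H b = ⊤ := by
    rw [iSup_bool_eq]
    exact Coprod.range_inl_sup_range_inr
  refine norm_exteriorSquare_le_of_isPeaked (H := H) (P := (cond · p q)) ?_ hε hε' hcard ha hℓ
    (hH ▸ Subgroup.mem_top w) hw
  rintro (_ | _) _ ⟨γ, rfl⟩ hγ
  · simpa using hρ₂ γ (ne_of_apply_ne Coprod.inr (by simpa using hγ))
  · simpa using hρ₁ γ (ne_of_apply_ne Coprod.inl (by simpa using hγ))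

/-- In every large dimension there are representations of `Γ` whose values at `γ ≠ 1` are peaked at
a prescribed off-diagonal entry, up to an arbitrarily small error and with a singular value gap of
order `exp (a * ℓ γ)`. -/
def HasPeakedRepresentations {Γ : Type*} [Group Γ] (ℓ : Γ → ℕ) (a : ℝ) : Prop :=
  ∀ᶠ n in atTop, ∀ p q : Fin n, p ≠ q → ∀ ε > 0,
    ∃ ρ : Γ →* Matrix (Fin n) (Fin n) ℝ, ∀ γ ≠ 1, IsPeaked ε (Real.exp (-a * ℓ γ)) p q (ρ γ)

theorem HasPeakedRepresentations.mono {Γ : Type*} [Group Γ] {ℓ ℓ' : Γ → ℕ}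
    (h : HasPeakedRepresentations ℓ a) (ha : 0 ≤ a) (hℓ : ∀ γ, ℓ' γ ≤ ℓ γ) :
    HasPeakedRepresentations ℓ' a := by
  refine Eventually.mono h fun n hn p q hpq ε hε ↦ ?_
  obtain ⟨ρ, hρ⟩ := hn p q hpq ε hε
  refine ⟨ρ, fun γ hγ ↦ ⟨(hρ γ hγ).abs_apply_le, (hρ γ hγ).norm_exteriorSquare_le.trans ?_⟩⟩
  have hle : (ℓ' γ : ℝ) ≤ ℓ γ := mod_cast hℓ γ
  rw [neg_mul, neg_mul]
  gcongr

theorem HasPeakedRepresentations.exists_coprod_hom {ℓ : Coprod Γ₁ Γ₂ → ℕ}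
    (h₁ : HasPeakedRepresentations (fun γ : Γ₁ ↦ ℓ (.inl γ)) a)
    (h₂ : HasPeakedRepresentations (fun γ : Γ₂ ↦ ℓ (.inr γ)) a)
    (ha : 0 ≤ a) (hℓ : ∀ g h, ℓ (g * h) ≤ ℓ g + ℓ h) :
    ∃ n, 2 ≤ n ∧ ∃ ρ : Coprod Γ₁ Γ₂ →* Matrix (Fin n) (Fin n) ℝ, ∀ w ≠ 1,
      ‖exteriorSquare (ρ w)‖ ≤ Real.exp (-a * ℓ w) / 8 * ‖ρ w‖ ^ 2 := by
  obtain ⟨n, hn, hn₁, hn₂⟩ := ((eventually_ge_atTop 4).and (h₁.and h₂)).exists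
  have hn' : (4 : ℝ) ≤ n := mod_cast hn
  let p : Fin n := ⟨0, by omega⟩
  let q : Fin n := ⟨1, by omega⟩
  have hpq : p ≠ q := by simp [p, q]
  have hε : 0 < 1 / (2 * n : ℝ) := by positivity
  obtain ⟨ρ₁, hρ₁⟩ := hn₁ p q hpq _ hε
  obtain ⟨ρ₂, hρ₂⟩ := hn₂ q p hpq.symm _ hε
  refine ⟨n, by omega, Coprod.lift ρ₁ ρ₂, fun w hw ↦
    norm_exteriorSquare_lift_le hρ₁ hρ₂ hε.le ?_ ?_ ha hℓ hw⟩
  · rw [div_le_div_iff₀ (by positivity) (by positivity)]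
    linarith
  · rw [Fintype.card_fin]
    exact le_of_eq (by field_simp)

theorem HasPeakedRepresentations.exists_injective_hom_log_sval_gaps (ha : 0 ≤ a)
    (h₁ : HasPeakedRepresentations (wordLength S₁) a)
    (h₂ : HasPeakedRepresentations (wordLength S₂) a)
    (hS₁ : Subgroup.closure S₁ = ⊤) (hS₂ : Subgroup.closure S₂ = ⊤) {T : Set (Coprod Γ₁ Γ₂)}
    (hT : Subgroup.closure T = ⊤) (hinl : Set.MapsTo Coprod.inl S₁ T)
    (hinr : Set.MapsTo Coprod.inr S₂ T) :
    ∃ (d : ℕ) (ρ : Coprod Γ₁ Γ₂ →* SpecialLinearGroup (Fin d) ℝ), Function.Injective ρ ∧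
      ∃ C, 0 < C ∧ ∀ w,
        a * wordLength T w - C ≤ Real.log (sval (ρ w : Matrix (Fin d) (Fin d) ℝ) 1) -
            Real.log (sval (ρ w : Matrix (Fin d) (Fin d) ℝ) 2) ∧
          a * wordLength T w - C ≤ Real.log (sval (ρ w : Matrix (Fin d) (Fin d) ℝ) (d - 1)) -
            Real.log (sval (ρ w : Matrix (Fin d) (Fin d) ℝ) d) := by
  have hmem (w : Coprod Γ₁ Γ₂) : w ∈ Subgroup.closure T := hT ▸ Subgroup.mem_top w
  have hle₁ (γ : Γ₁) : wordLength T (.inl γ) ≤ wordLength S₁ γ :=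
    wordLength_map_le _ hinl (hS₁ ▸ Subgroup.mem_top γ)
  have hle₂ (γ : Γ₂) : wordLength T (.inr γ) ≤ wordLength S₂ γ :=
    wordLength_map_le _ hinr (hS₂ ▸ Subgroup.mem_top γ)
  obtain ⟨n, hn, ρ, hρ⟩ := exists_coprod_hom (h₁.mono ha hle₁) (h₂.mono ha hle₂) ha
    fun g h ↦ wordLength_mul_le (hmem g) (hmem h)
  have : Nontrivial (Fin n) := Fin.nontrivial_iff_two_le.mpr hn
  exact FreeProductAnosov.exists_injective_hom_log_sval_gaps ρ ha (wordLength_one T)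
    (fun w ↦ wordLength_inv (hmem w)) hρ

theorem closure_image_inl_union_image_inr (hS₁ : Subgroup.closure S₁ = ⊤)
    (hS₂ : Subgroup.closure S₂ = ⊤) :
    Subgroup.closure (Coprod.inl '' S₁ ∪ Coprod.inr '' S₂ : Set (Coprod Γ₁ Γ₂)) = ⊤ := by
  rw [Subgroup.closure_union, ← MonoidHom.map_closure, ← MonoidHom.map_closure, hS₁, hS₂,
    ← MonoidHom.range_eq_map, ← MonoidHom.range_eq_map, Coprod.range_inl_sup_range_inr]

end FreeProducts

section AnosovGroups

open Asymptotics Filter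

variable {d k : ℕ} {a C : ℝ}

theorem hasPeakedRepresentations_of_hasVisibleCoefficient {Γ ι : Type*} [Group Γ] [Fintype ι]
    [DecidableEq ι] {ℓ : Γ → ℕ} {R : Γ →* Matrix ι ι ℝ} (hR : HasExpGap ℓ a R) (ha : 0 ≤ a)
    (hgrowth : (fun γ ↦ Real.exp (a * ℓ γ)) =O[⊤] R) {f v : ι → ℝ}
    (hfv : HasVisibleCoefficient R f v) : HasPeakedRepresentations ℓ a := by
  filter_upwards [eventually_ge_atTop (Fintype.card ι + 2)] with n hn p q hpq ε hε
  have hcard : Fintype.card ι ≤ Fintype.card ↥({p, q}ᶜ : Finset (Fin n)) := by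
    rw [Fintype.card_coe, Finset.card_compl, Finset.card_pair hpq, Fintype.card_fin]
    omega
  obtain ⟨g⟩ := Function.Embedding.nonempty_of_card_le hcard
  have hg {i : Fin n} (hi : i ∈ ({p, q} : Finset (Fin n))) :
      i ∉ Set.range (g.trans (.subtype _)) := by
    rintro ⟨j, rfl⟩
    exact Finset.mem_compl.mp (g j).2 hi
  exact exists_isPeaked hR ha hgrowth hfv (g.trans (.subtype _)) (hg (by simp)) (hg (by simp))
    hpq hε

theorem hasPeakedRepresentations_of_log_sval_gap {Γ : Type*} [Group Γ] {S : Set Γ}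
    (hS : S.Finite) (hcl : Subgroup.closure S = ⊤) {r : Γ →* SpecialLinearGroup (Fin d) ℝ}
    (hr : Function.Injective r) (hk : 1 ≤ k) (hkd : k < d) (ha : 0 < a)
    (hlog : ∀ γ, a * wordLength S γ - C ≤
      Real.log (sval (r γ : Matrix (Fin d) (Fin d) ℝ) k) -
        Real.log (sval (r γ : Matrix (Fin d) (Fin d) ℝ) (k + 1))) :
    HasPeakedRepresentations (wordLength S) a := by
  let r' : Γ →* Matrix (Fin d) (Fin d) ℝ := SpecialLinearGroup.coeMonoidHom.comp r
  obtain ⟨b, hb, hgrowth⟩ := exists_isBigO_exp_wordLength hS hcl r'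
  obtain ⟨ι, _, _, R, f, v, hR, hRgrowth, hfv⟩ := exists_hasExpGap_hasVisibleCoefficient r'
    (SpecialLinearGroup.coeMonoidHom_injective.comp hr) (fun γ ↦ (r γ).2) hk hkd hlog ha
    (tendsto_wordLength_cofinite hS hcl) hb hgrowth
  exact hasPeakedRepresentations_of_hasVisibleCoefficient hR ha.le hRgrowth hfv

theorem hasPeakedRepresentations_closure {S : Set (SpecialLinearGroup (Fin d) ℝ)} (hS : S.Finite)
    (hk : 1 ≤ k) (hkd : k ≤ d - 1) (ha : 0 < a)
    (hlog : ∀ γ ∈ Subgroup.closure S, a * wordLength S γ - C ≤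
      Real.log (sval (γ : Matrix (Fin d) (Fin d) ℝ) k) -
        Real.log (sval (γ : Matrix (Fin d) (Fin d) ℝ) (k + 1))) :
    HasPeakedRepresentations
      (wordLength (Subtype.val ⁻¹' S : Set (Subgroup.closure S))) a := by
  refine hasPeakedRepresentations_of_log_sval_gap (hS.preimage Subtype.val_injective.injOn)
    Subgroup.closure_closure_coe_preimage (r := (Subgroup.closure S).subtype)
    (Subgroup.subtype_injective _) hk (by omega) ha (C := C) fun γ ↦ (hlog γ γ.2).trans' ?_
  have hle : (wordLength (Subtype.val ⁻¹' S) γ : ℝ) ≤ wordLength S γ.val :=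
    mod_cast wordLength_preimage_val_le γ
  gcongr

end AnosovGroups

end FreeProductAnosov

/-- **Douba–Tsouvalas, Danciger–Guéritaud–Kassel**: a free product of Anosov groups is
isomorphic to an Anosov group. If `Γᵢ ≤ SL(dᵢ, ℝ)` is finitely generated and `P_{θᵢ}`-Anosov
(`i = 1, 2`), then there is `d` and an injective homomorphism `ρ : Γ₁ * Γ₂ → SL(d, ℝ)`
whose image is `P_{1,d-1}`-Anosov. -/
theorem free_product_of_anosov_is_anosov
    (d₁ d₂ : ℕ)
    (Γ₁ : Subgroup (Matrix.SpecialLinearGroup (Fin d₁) ℝ))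
    (Γ₂ : Subgroup (Matrix.SpecialLinearGroup (Fin d₂) ℝ))
    (S₁ : Finset (Matrix.SpecialLinearGroup (Fin d₁) ℝ))
    (S₂ : Finset (Matrix.SpecialLinearGroup (Fin d₂) ℝ))
    (hS₁ : Subgroup.closure (S₁ : Set (Matrix.SpecialLinearGroup (Fin d₁) ℝ)) = Γ₁)
    (hS₂ : Subgroup.closure (S₂ : Set (Matrix.SpecialLinearGroup (Fin d₂) ℝ)) = Γ₂)
    (θ₁ θ₂ : Finset ℕ) (hθ₁ : θ₁.Nonempty) (hθ₂ : θ₂.Nonempty)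
    (hθ₁' : ∀ k ∈ θ₁, 1 ≤ k ∧ k ≤ d₁ - 1) (hθ₂' : ∀ k ∈ θ₂, 1 ≤ k ∧ k ≤ d₂ - 1)
    (a C : ℝ) (ha : 0 < a) (hC : 0 < C)
    (hAnosov₁ : ∀ γ ∈ Γ₁, ∀ k ∈ θ₁,
      a * (wordLength (S₁ : Set _) γ) - C ≤
        Real.log (sval (γ : Matrix (Fin d₁) (Fin d₁) ℝ) k) -
          Real.log (sval (γ : Matrix (Fin d₁) (Fin d₁) ℝ) (k + 1)))
    (hAnosov₂ : ∀ γ ∈ Γ₂, ∀ k ∈ θ₂,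
      a * (wordLength (S₂ : Set _) γ) - C ≤
        Real.log (sval (γ : Matrix (Fin d₂) (Fin d₂) ℝ) k) -
          Real.log (sval (γ : Matrix (Fin d₂) (Fin d₂) ℝ) (k + 1))) :
    ∃ (d : ℕ) (ρ : Monoid.Coprod Γ₁ Γ₂ →* Matrix.SpecialLinearGroup (Fin d) ℝ),
      Function.Injective ρ ∧
      ∃ (T : Finset (Monoid.Coprod Γ₁ Γ₂)),
        Subgroup.closure (T : Set (Monoid.Coprod Γ₁ Γ₂)) = ⊤ ∧
        ∃ a' C' : ℝ, 0 < a' ∧ 0 < C' ∧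
          ∀ w : Monoid.Coprod Γ₁ Γ₂,
            (a' * (wordLength (T : Set _) w) - C' ≤
              Real.log (sval ((ρ w : Matrix (Fin d) (Fin d) ℝ)) 1) -
                Real.log (sval ((ρ w : Matrix (Fin d) (Fin d) ℝ)) 2)) ∧
            (a' * (wordLength (T : Set _) w) - C' ≤
              Real.log (sval ((ρ w : Matrix (Fin d) (Fin d) ℝ)) (d - 1)) -
                Real.log (sval ((ρ w : Matrix (Fin d) (Fin d) ℝ)) d)) := by
  subst hS₁ hS₂
  obtain ⟨k₁, hk₁⟩ := hθ₁
  obtain ⟨k₂, hk₂⟩ := hθ₂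
  have h₁ := FreeProductAnosov.hasPeakedRepresentations_closure S₁.finite_toSet
    (hθ₁' k₁ hk₁).1 (hθ₁' k₁ hk₁).2 ha fun γ hγ ↦ hAnosov₁ γ hγ k₁ hk₁
  have h₂ := FreeProductAnosov.hasPeakedRepresentations_closure S₂.finite_toSet
    (hθ₂' k₂ hk₂).1 (hθ₂' k₂ hk₂).2 ha fun γ hγ ↦ hAnosov₂ γ hγ k₂ hk₂
  let T₁ : Set (Subgroup.closure (S₁ : Set _)) := {γ | γ.1 ∈ S₁}
  let T₂ : Set (Subgroup.closure (S₂ : Set _)) := {γ | γ.1 ∈ S₂}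
  have hT₁ : Subgroup.closure T₁ = ⊤ := Subgroup.closure_closure_coe_preimage
  have hT₂ : Subgroup.closure T₂ = ⊤ := Subgroup.closure_closure_coe_preimage
  have hfin₁ : T₁.Finite := S₁.finite_toSet.preimage Subtype.val_injective.injOn
  have hfin₂ : T₂.Finite := S₂.finite_toSet.preimage Subtype.val_injective.injOn
  have hT := FreeProductAnosov.closure_image_inl_union_image_inr hT₁ hT₂
  have hfin := (hfin₁.image Monoid.Coprod.inl).union (hfin₂.image Monoid.Coprod.inr)
  obtain ⟨d, ρ, hρ, C', hC', hgap⟩ := h₁.exists_injective_hom_log_sval_gaps ha.le h₂ hT₁ hT₂ hT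
    ((Set.mapsTo_image _ _).mono_right Set.subset_union_left)
    ((Set.mapsTo_image _ _).mono_right Set.subset_union_right)
  rw [← hfin.coe_toFinset] at hT hgap
  exact ⟨d, ρ, hρ, hfin.toFinset, hT, a, C', ha, hC', hgap⟩
end

section
/- Let Γ be a subgroup of SL(d,ℝ) generated by a finite set S and suppose Γ is P_k-Anosov for some 1 ≤ k ≤ d−1: there exist a, C > 0 such that log σ_k(γ) − log σ_{k+1}(γ) ≥ a·|γ| − C for all γ ∈ Γ, where |γ| is word length with respect to S. Then the orbit map is a quasi-isometric embedding: there exist constants L ≥ 1 and C' ≥ 0 such that (1/L)·|γ| − C' ≤ ‖κ(γ)‖ ≤ L·|γ| + C' for all γ ∈ Γ, where ‖κ(γ)‖ denotes the Euclidean norm of the Cartan projection κ(γ) = (log σ₁(γ), …, log σ_d(γ)). -/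
open Matrix

/-- The Euclidean norm of the Cartan projection `κ(A) = (log σ₁(A), …, log σ_d(A))`. -/
noncomputable def cartanNorm {d : ℕ} (A : Matrix (Fin d) (Fin d) ℝ) : ℝ :=
  Real.sqrt (∑ k ∈ Finset.Icc 1 d, (Real.log (sval A k)) ^ 2)

/-!
Every singular value of `A` is the length of the image under `A` of a unit vector, so `|log σᵢ(A)|`
is at most the larger of `log⁺ ‖A‖` and `log⁺ ‖A⁻¹‖`. The latter is subadditive and invariant under
inversion, hence grows at most linearly in the word length: this is the upper bound. For the lower
bound, each coordinate of `κ(A)` is at most `‖κ(A)‖`, so a gap `log σₖ - log σₖ₊₁` is at most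
`2 ‖κ(A)‖`, and the Anosov condition makes the gap grow linearly.
-/

section WordLength

variable {G : Type*} [Group G]

theorem exists_list_length_eq_wordLength {S : Set G} {γ : G} (hγ : γ ∈ Subgroup.closure S) :
    ∃ w : List G, w.length = wordLength S γ ∧ (∀ g ∈ w, g ∈ S ∨ g⁻¹ ∈ S) ∧ w.prod = γ := by
  rw [← Subgroup.mem_toSubmonoid, Subgroup.closure_toSubmonoid] at hγ
  obtain ⟨w, hwS, hwγ⟩ := Submonoid.exists_list_of_mem_closure hγ
  exact Nat.sInf_mem (s := {n | ∃ w : List G, w.length = n ∧ _}) ⟨w.length, w, rfl, hwS, hwγ⟩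

theorem groupSeminorm_list_prod_le_mul_length (p : GroupSeminorm G) {M : ℝ} {w : List G}
    (hw : ∀ g ∈ w, p g ≤ M) : p w.prod ≤ M * w.length := by
  induction w with
  | nil => simp
  | cons g w ih =>
    rw [List.forall_mem_cons] at hw
    calc p (g :: w).prod = p (g * w.prod) := by rw [List.prod_cons]
      _ ≤ p g + p w.prod := map_mul_le_add p g w.prod
      _ ≤ M + M * w.length := add_le_add hw.1 (ih hw.2)
      _ = M * (g :: w).length := by push_cast [List.length_cons]; ring

theorem groupSeminorm_le_mul_wordLength (p : GroupSeminorm G) {S : Set G} {M : ℝ}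
    (hM : ∀ s ∈ S, p s ≤ M) {γ : G} (hγ : γ ∈ Subgroup.closure S) :
    p γ ≤ M * wordLength S γ := by
  obtain ⟨w, hlength, hwS, rfl⟩ := exists_list_length_eq_wordLength hγ
  rw [← hlength]
  refine groupSeminorm_list_prod_le_mul_length p fun g hg => ?_
  rcases hwS g hg with hgS | hgS
  · exact hM g hgS
  · exact map_inv_eq_map p g ▸ hM g⁻¹ hgS

end WordLength

section LogNorm

open scoped Real

/-- The length function `u ↦ max (log⁺ ‖u‖) (log⁺ ‖u⁻¹‖)` on the units of a C⋆-ring; for `GL d ℝ` it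
is comparable to the displacement of the basepoint of the symmetric space. With `log⁺` in place of
`log` the trivial ring, where all norms are zero, needs no separate treatment. -/
noncomputable def logNorm (R : Type*) [NormedRing R] [StarRing R] [CStarRing R] :
    GroupSeminorm Rˣ where
  toFun u := max (log⁺ ‖(u : R)‖) (log⁺ ‖((u⁻¹ : Rˣ) : R)‖)
  map_one' := by
    rcases subsingleton_or_nontrivial R with _ | _
    · simp [Subsingleton.elim (1 : R) 0]
    · simp
  mul_le' u v := by
    have log_norm_mul_le (x y : R) : log⁺ ‖x * y‖ ≤ log⁺ ‖x‖ + log⁺ ‖y‖ :=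
      (Real.posLog_le_posLog (norm_nonneg _) (norm_mul_le x y)).trans Real.posLog_mul
    rw [_root_.mul_inv_rev, Units.val_mul, Units.val_mul]
    refine max_le ((log_norm_mul_le _ _).trans ?_) ((log_norm_mul_le _ _).trans ?_)
    · exact add_le_add (le_max_left _ _) (le_max_left _ _)
    · rw [add_comm]
      exact add_le_add (le_max_right _ _) (le_max_right _ _)
  inv' u := by rw [inv_inv, max_comm]

end LogNorm

section SingularValues

open scoped Matrix.Norms.L2Operator Real

theorem sqrt_eigenvalues_conjTranspose_mul_self {m n 𝕜 : Type*} [Fintype m] [Fintype n]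
    [DecidableEq n] [RCLike 𝕜] (A : Matrix m n 𝕜) (i : n) :
    √((isHermitian_conjTranspose_mul_self A).eigenvalues i) =
      ‖WithLp.toLp 2 (A *ᵥ (isHermitian_conjTranspose_mul_self A).eigenvectorBasis i)‖ := by
  have norm_sq_mulVec (v : EuclideanSpace 𝕜 n) :
      ‖WithLp.toLp 2 (A *ᵥ v)‖ ^ 2 = RCLike.re (star v.ofLp ⬝ᵥ ((Aᴴ * A) *ᵥ v)) := by
    rw [@norm_sq_eq_re_inner 𝕜, EuclideanSpace.inner_toLp_toLp, dotProduct_comm, star_mulVec,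
      ← dotProduct_mulVec, mulVec_mulVec]
  rw [IsHermitian.eigenvalues_eq, ← norm_sq_mulVec, Real.sqrt_sq (norm_nonneg _)]

variable {d : ℕ}

theorem exists_norm_toEuclideanCLM_eq_sval (A : Matrix (Fin d) (Fin d) ℝ) {k : ℕ}
    (hk : k ∈ Finset.Icc 1 d) :
    ∃ v : EuclideanSpace ℝ (Fin d), ‖v‖ = 1 ∧ ‖toEuclideanCLM (𝕜 := ℝ) A v‖ = sval A k := by
  have exists_eigenvector (i : Fin d) : ∃ v : EuclideanSpace ℝ (Fin d), ‖v‖ = 1 ∧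
      ‖toEuclideanCLM (𝕜 := ℝ) A v‖ =
        √((isHermitian_conjTranspose_mul_self A).eigenvalues i) :=
    ⟨(isHermitian_conjTranspose_mul_self A).eigenvectorBasis i,
      OrthonormalBasis.norm_eq_one _ i, (sqrt_eigenvalues_conjTranspose_mul_self A i).symm⟩
  rw [sval, dif_pos (Finset.mem_Icc.1 hk)]
  exact exists_eigenvector _

theorem sval_le_norm (A : Matrix (Fin d) (Fin d) ℝ) {k : ℕ} (hk : k ∈ Finset.Icc 1 d) :
    sval A k ≤ ‖A‖ := by
  obtain ⟨v, hv, hAv⟩ := exists_norm_toEuclideanCLM_eq_sval A hk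
  rw [← hAv, cstar_norm_def]
  exact ContinuousLinearMap.unit_le_opNorm _ v hv.le

theorem one_le_norm_mul_sval {A B : Matrix (Fin d) (Fin d) ℝ} (hBA : B * A = 1) {k : ℕ}
    (hk : k ∈ Finset.Icc 1 d) : 1 ≤ ‖B‖ * sval A k := by
  obtain ⟨v, hv, hAv⟩ := exists_norm_toEuclideanCLM_eq_sval A hk
  set T := toEuclideanCLM (n := Fin d) (𝕜 := ℝ)
  calc 1 = ‖T B (T A v)‖ := by
        rw [← mul_apply_eq_comp, ← map_mul, hBA, map_one, one_apply_eq_self, hv]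
    _ ≤ ‖T B‖ * ‖T A v‖ := (T B).le_opNorm _
    _ = ‖B‖ * sval A k := by rw [hAv, cstar_norm_def]

theorem abs_log_sval_le_logNorm (A : GL (Fin d) ℝ) {k : ℕ} (hk : k ∈ Finset.Icc 1 d) :
    |Real.log (sval (A : Matrix (Fin d) (Fin d) ℝ) k)| ≤
      logNorm (Matrix (Fin d) (Fin d) ℝ) A := by
  set σ := sval (A : Matrix (Fin d) (Fin d) ℝ) k
  have one_le : 1 ≤ ‖((A⁻¹ : GL (Fin d) ℝ) : Matrix (Fin d) (Fin d) ℝ)‖ * σ :=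
    one_le_norm_mul_sval A.inv_mul hk
  have σ_pos : 0 < σ := pos_of_mul_pos_right (one_pos.trans_le one_le) (norm_nonneg _)
  have log_le_posLog {x y : ℝ} (hx : 0 < x) (hxy : x ≤ y) : Real.log x ≤ log⁺ y :=
    (Real.log_le_log hx hxy).trans (le_max_right _ _)
  refine abs_le'.2 ⟨?_, ?_⟩
  · exact (log_le_posLog σ_pos (sval_le_norm _ hk)).trans (le_max_left _ _)
  · rw [← Real.log_inv]
    exact (log_le_posLog (inv_pos.2 σ_pos) ((inv_le_iff_one_le_mul₀ σ_pos).2 one_le)).trans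
      (le_max_right _ _)

end SingularValues

section CartanNorm

variable {d : ℕ}

theorem abs_log_sval_le_cartanNorm (A : Matrix (Fin d) (Fin d) ℝ) {k : ℕ}
    (hk : k ∈ Finset.Icc 1 d) : |Real.log (sval A k)| ≤ cartanNorm A :=
  Real.abs_le_sqrt <|
    Finset.single_le_sum (f := fun k => Real.log (sval A k) ^ 2) (fun _ _ => sq_nonneg _) hk

theorem log_sval_sub_log_sval_le_two_mul_cartanNorm (A : Matrix (Fin d) (Fin d) ℝ) {i j : ℕ}
    (hi : i ∈ Finset.Icc 1 d) (hj : j ∈ Finset.Icc 1 d) :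
    Real.log (sval A i) - Real.log (sval A j) ≤ 2 * cartanNorm A := by
  have hi := abs_le.1 (abs_log_sval_le_cartanNorm A hi)
  have hj := abs_le.1 (abs_log_sval_le_cartanNorm A hj)
  linarith

open scoped Matrix.Norms.L2Operator in
theorem cartanNorm_le_sqrt_mul_logNorm (A : GL (Fin d) ℝ) :
    cartanNorm (A : Matrix (Fin d) (Fin d) ℝ) ≤
      √d * logNorm (Matrix (Fin d) (Fin d) ℝ) A := by
  set r := logNorm (Matrix (Fin d) (Fin d) ℝ) A
  have hr : 0 ≤ r := apply_nonneg _ A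
  calc cartanNorm (A : Matrix (Fin d) (Fin d) ℝ)
      ≤ √(∑ _ ∈ Finset.Icc 1 d, r ^ 2) :=
        Real.sqrt_le_sqrt <| Finset.sum_le_sum fun k hk =>
          sq_le_sq.2 ((abs_log_sval_le_logNorm A hk).trans (le_abs_self r))
    _ = √(d * r ^ 2) := by simp
    _ = √d * r := by rw [Real.sqrt_mul (Nat.cast_nonneg d), Real.sqrt_sq hr]

end CartanNorm

theorem exists_quasiIsometry_constants {ι : Type*} {s : Set ι} {f ℓ : ι → ℝ} {a b C : ℝ}
    (ha : 0 < a) (hℓ : ∀ x ∈ s, 0 ≤ ℓ x) (lower : ∀ x ∈ s, a * ℓ x - C ≤ f x)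
    (upper : ∀ x ∈ s, f x ≤ b * ℓ x) :
    ∃ L C' : ℝ, 1 ≤ L ∧ 0 ≤ C' ∧
      ∀ x ∈ s, (1 / L) * ℓ x - C' ≤ f x ∧ f x ≤ L * ℓ x + C' := by
  refine ⟨max 1 (max (1 / a) b), |C|, le_max_left _ _, abs_nonneg C, fun x hx => ?_⟩
  set L := max 1 (max (1 / a) b)
  have inv_L_le : 1 / L ≤ a := by
    rw [one_div_le (lt_max_of_lt_left one_pos) ha]
    exact (le_max_left _ _).trans (le_max_right _ _)
  have b_le_L : b ≤ L := (le_max_right _ _).trans (le_max_right _ _)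
  constructor
  · exact (sub_le_sub (mul_le_mul_of_nonneg_right inv_L_le (hℓ x hx)) (le_abs_self C)).trans
      (lower x hx)
  · exact (upper x hx).trans <| (mul_le_mul_of_nonneg_right b_le_L (hℓ x hx)).trans <|
      le_add_of_nonneg_right (abs_nonneg C)

open scoped Matrix.Norms.L2Operator in
theorem anosov_orbit_map_qi_embedding_general {G : Type*} [Group G] {d i j : ℕ}
    (hi : i ∈ Finset.Icc 1 d) (hj : j ∈ Finset.Icc 1 d) (ρ : G →* GL (Fin d) ℝ) {S : Set G}
    (hS : BddAbove ((fun s => logNorm (Matrix (Fin d) (Fin d) ℝ) (ρ s)) '' S)) {a C : ℝ}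
    (ha : 0 < a)
    (hgap : ∀ γ ∈ Subgroup.closure S,
      a * wordLength S γ - C ≤
        Real.log (sval (ρ γ : Matrix (Fin d) (Fin d) ℝ) i) -
          Real.log (sval (ρ γ : Matrix (Fin d) (Fin d) ℝ) j)) :
    ∃ L C' : ℝ, 1 ≤ L ∧ 0 ≤ C' ∧
      ∀ γ ∈ Subgroup.closure S,
        (1 / L) * wordLength S γ - C' ≤ cartanNorm (ρ γ : Matrix (Fin d) (Fin d) ℝ) ∧
          cartanNorm (ρ γ : Matrix (Fin d) (Fin d) ℝ) ≤ L * wordLength S γ + C' := by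
  obtain ⟨M, hM⟩ := hS
  refine exists_quasiIsometry_constants (s := (Subgroup.closure S : Set G)) (a := a / 2)
    (b := √d * M) (C := C / 2) (half_pos ha) (fun γ _ => Nat.cast_nonneg _)
    (fun γ hγ => ?_) fun γ hγ => ?_
  · have gap_ge := hgap γ hγ
    have gap_le :=
      log_sval_sub_log_sval_le_two_mul_cartanNorm (ρ γ : Matrix (Fin d) (Fin d) ℝ) hi hj
    linarith
  · have logNorm_le : logNorm (Matrix (Fin d) (Fin d) ℝ) (ρ γ) ≤ M * wordLength S γ :=
      groupSeminorm_le_mul_wordLength ((logNorm _).comp ρ)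
        (fun s hs => hM (Set.mem_image_of_mem _ hs)) hγ
    calc cartanNorm (ρ γ : Matrix (Fin d) (Fin d) ℝ)
        ≤ √d * logNorm (Matrix (Fin d) (Fin d) ℝ) (ρ γ) := cartanNorm_le_sqrt_mul_logNorm (ρ γ)
      _ ≤ √d * (M * wordLength S γ) := by gcongr
      _ = √d * M * wordLength S γ := (mul_assoc _ _ _).symm

/-- If `Γ ≤ SL(d, ℝ)` is generated by a finite set `S` and is `P_k`-Anosov for some
`1 ≤ k ≤ d-1`, then the orbit map into the symmetric space is a quasi-isometric embedding:
there exist `L ≥ 1` and `C' ≥ 0` with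
`(1/L)·|γ| - C' ≤ ‖κ(γ)‖ ≤ L·|γ| + C'` for all `γ ∈ Γ`. -/
theorem anosov_orbit_map_qi_embedding (d k : ℕ) (hk : 1 ≤ k) (hk' : k ≤ d - 1)
    (Γ : Subgroup (Matrix.SpecialLinearGroup (Fin d) ℝ))
    (S : Finset (Matrix.SpecialLinearGroup (Fin d) ℝ))
    (hS : Subgroup.closure (S : Set (Matrix.SpecialLinearGroup (Fin d) ℝ)) = Γ)
    (a C : ℝ) (ha : 0 < a) (hC : 0 < C)
    (hAnosov : ∀ γ ∈ Γ,
      a * (wordLength (S : Set _) γ) - C ≤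
        Real.log (sval (γ : Matrix (Fin d) (Fin d) ℝ) k) -
          Real.log (sval (γ : Matrix (Fin d) (Fin d) ℝ) (k + 1))) :
    ∃ L C' : ℝ, 1 ≤ L ∧ 0 ≤ C' ∧
      ∀ γ ∈ Γ,
        (1 / L) * (wordLength (S : Set _) γ) - C' ≤
            cartanNorm (γ : Matrix (Fin d) (Fin d) ℝ) ∧
          cartanNorm (γ : Matrix (Fin d) (Fin d) ℝ) ≤
            L * (wordLength (S : Set _) γ) + C' := by
  subst hS
  exact anosov_orbit_map_qi_embedding_general (Finset.mem_Icc.2 ⟨hk, by omega⟩)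
    (Finset.mem_Icc.2 ⟨by omega, by omega⟩) Matrix.SpecialLinearGroup.toGL
    (S.finite_toSet.image _).bddAbove ha hAnosov
end
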